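/- For every η > 0 there is an integer n₀ = n₀(η) such that every d-regular (undirected) graph on n ≥ n₀ vertices with d ≥ (1/2 + η)n contains at least (d − ηn)/2 pairwise edge-disjoint Hamilton cycles. -/

import Mathlib

/-!
Colour the vertices evenly with the elements of `ZMod K`, for a large prime `K`. The edges `uv` with
`f v = f u + s` form a nearly regular bipartite graph for each `s ≠ 0`, which König's theorem splits
into matchings; read as partial permutations and cut at one colour each, these become almost
spanning linear forests. So almost all edges of the graph `G` are covered by about `d / 2`
edge-disjoint linear forests.

A few of these forests, chosen at random, are set aside as a reservoir. Each of the others is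
extended to a cyclic order of the vertices, and the missing edges of this cyclic order are
eliminated one at a time by exchanges (`2`-opt moves): `xy` and `wz` are replaced by `xw` and `yz`,
both unused edges of the reservoir. As `d ≥ (1 / 2 + η) n`, each pair `x`, `y` has linearly many
such exchanges in `G`, in every cyclic order, and the random reservoir inherits a positive
proportion of them. For this a union bound over all cyclic orders is not affordable, but the cyclic
orders that arise differ from an original one in few places, so their exchanges are, up to a small
error, given by an orientation of the edges of that one which rarely changes, and there are few such
orientations.

No vertex may lose too many reservoir edges, and so a vertex whose used degree has become large is
avoided, unless the current forest ends there; there are always few vertices of this kind.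
-/

namespace HamiltonPacking

open Finset Filter
open scoped BigOperators

/-- The permutation taking each vertex to its successor in the cyclic order
`e 0, e 1, …, e (n - 1)`; a cyclic order of `V` is encoded as an enumeration `Fin n ≃ V`. -/
def succPerm {V : Type*} {n : ℕ} [NeZero n] (e : Fin n ≃ V) : Equiv.Perm V :=
  e.permCongr (Equiv.addRight 1)

/-- The edges joining consecutive elements of a cyclic order: for `3 ≤ n`, the edge set of the
Hamilton cycle which traverses the vertices in this order. -/
def cyclicEdges {V : Type*} [DecidableEq V] {n : ℕ} [NeZero n] (e : Fin n ≃ V) :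
    Finset (Sym2 V) :=
  univ.image fun j => s(e j, e (j + 1))

section CyclicOrder

variable {V : Type*} {n : ℕ} [NeZero n] (e : Fin n ≃ V)

@[simp]
lemma succPerm_apply (j : Fin n) : succPerm e (e j) = e (j + 1) := by
  simp [succPerm, Equiv.permCongr_apply]

lemma succPerm_succPerm_ne (hn : 3 ≤ n) (v : V) : succPerm e (succPerm e v) ≠ v := by
  obtain ⟨j, rfl⟩ := e.surjective v
  obtain ⟨m, rfl⟩ := Nat.exists_eq_add_of_le' hn
  rw [succPerm_apply, succPerm_apply, Ne, e.injective.eq_iff, add_assoc, add_eq_left]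
  exact fun h => by simpa [Fin.val_add, Nat.mod_eq_of_lt] using congrArg Fin.val h

lemma mk_succPerm_injective (hn : 3 ≤ n) :
    Function.Injective fun v => s(v, succPerm e v) := by
  intro v w h
  rcases Sym2.eq_iff.1 h with ⟨h, -⟩ | ⟨rfl, h⟩
  · exact h
  · exact absurd h (succPerm_succPerm_ne e hn w)

variable [DecidableEq V]

lemma mem_cyclicEdges {z : Sym2 V} : z ∈ cyclicEdges e ↔ ∃ v, s(v, succPerm e v) = z := by
  simp [cyclicEdges, e.symm.exists_congr_left]

lemma mk_succPerm_mem_cyclicEdges (v : V) : s(v, succPerm e v) ∈ cyclicEdges e :=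
  (mem_cyclicEdges e).2 ⟨v, rfl⟩

lemma mk_mem_cyclicEdges {v w : V} :
    s(v, w) ∈ cyclicEdges e ↔ succPerm e v = w ∨ succPerm e w = v := by
  rw [mem_cyclicEdges]
  constructor
  · rintro ⟨u, hu⟩
    rcases Sym2.eq_iff.1 hu with ⟨rfl, h⟩ | ⟨rfl, h⟩
    · exact Or.inl h
    · exact Or.inr h
  · rintro (rfl | rfl)
    · exact ⟨v, rfl⟩
    · exact ⟨w, Sym2.eq_swap⟩

lemma cyclicEdges_eq_image [Fintype V] :
    cyclicEdges e = univ.image fun v => s(v, succPerm e v) := by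
  ext z
  simp [mem_cyclicEdges]

lemma card_cyclicEdges (hn : 3 ≤ n) : #(cyclicEdges e) = n := by
  have : Fintype V := Fintype.ofEquiv _ e
  rw [cyclicEdges_eq_image, card_image_of_injective _ (mk_succPerm_injective e hn), card_univ,
    ← Fintype.card_congr e, Fintype.card_fin]

end CyclicOrder

lemma eq_add_one_or_eq_add_one_of_cycleGraph_adj {m : ℕ} {a b : Fin (m + 3)}
    (h : (SimpleGraph.cycleGraph (m + 3)).Adj a b) : b = a + 1 ∨ a = b + 1 := by
  rw [SimpleGraph.cycleGraph_adj, sub_eq_iff_eq_add', sub_eq_iff_eq_add'] at h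
  exact h.symm

lemma exists_isHamiltonianCycle_edges_subset {V : Type*} [DecidableEq V] (G : SimpleGraph V)
    {n : ℕ} [NeZero n] (hn : 3 ≤ n) (e : Fin n ≃ V) (he : ∀ v, G.Adj v (succPerm e v)) :
    ∃ (x : V) (c : G.Walk x x), c.IsHamiltonianCycle ∧ ∀ z ∈ c.edges, z ∈ cyclicEdges e := by
  obtain ⟨m, rfl⟩ := Nat.exists_eq_add_of_le' hn
  let f : SimpleGraph.cycleGraph (m + 3) →g G :=
    { toFun := e
      map_rel' := by
        intro a b h
        rcases eq_add_one_or_eq_add_one_of_cycleGraph_adj h with rfl | rfl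
        · simpa using he (e a)
        · simpa using (he (e b)).symm }
  refine ⟨_, (SimpleGraph.cycleGraph.cycle m).map f, ?_, fun z hz => ?_⟩
  · refine SimpleGraph.Walk.IsHamiltonianCycle.map e.bijective ?_
    rw [SimpleGraph.Walk.isHamiltonianCycle_iff_isCycle_and_length_eq,
      SimpleGraph.cycleGraph.length_cycle, Fintype.card_fin]
    exact ⟨SimpleGraph.cycleGraph.isCycle_cycle, rfl⟩
  · rw [SimpleGraph.Walk.edges_map, List.mem_map] at hz
    obtain ⟨⟨a, b⟩, hz', rfl⟩ := hz
    refine (mk_mem_cyclicEdges e).2 ?_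
    rcases eq_add_one_or_eq_add_one_of_cycleGraph_adj
      (SimpleGraph.Walk.adj_of_mem_edges _ hz') with rfl | rfl
    · exact Or.inl (succPerm_apply e a)
    · exact Or.inr (succPerm_apply e b)

section Koenig

variable {V : Type*} [Fintype V]

lemma exists_perm_pos_of_sum_eq {M : V → V → ℕ} {D : ℕ} (hD : 0 < D)
    (hrow : ∀ u, ∑ v, M u v = D) (hcol : ∀ v, ∑ u, M u v = D) :
    ∃ π : Equiv.Perm V, ∀ u, 0 < M u (π u) := by
  classical
  have hD' : (D : ℚ) ≠ 0 := by exact_mod_cast hD.ne'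
  let N : Matrix V V ℚ := fun u v => M u v / D
  have hN : N ∈ doublyStochastic ℚ V := by
    refine mem_doublyStochastic_iff_sum.2 ⟨fun u v => by positivity, fun u => ?_, fun v => ?_⟩
    · rw [← sum_div, ← Nat.cast_sum, hrow, div_self hD']
    · rw [← sum_div, ← Nat.cast_sum, hcol, div_self hD']
  obtain ⟨w, hw_nonneg, hw_sum, hwN⟩ := exists_eq_sum_perm_of_mem_doublyStochastic hN
  obtain ⟨π, -, hπ⟩ : ∃ π ∈ univ, 0 < w π :=
    (sum_pos_iff_of_nonneg fun π _ => hw_nonneg π).1 (hw_sum ▸ one_pos)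
  refine ⟨π, fun u => ?_⟩
  have hle : w π ≤ N u (π u) := by
    rw [← hwN, Matrix.sum_apply]
    refine le_of_eq_of_le ?_ (single_le_sum (f := fun ρ => (w ρ • ρ.permMatrix ℚ) u (π u))
      (fun ρ _ => ?_) (mem_univ π))
    · simp [Equiv.toPEquiv_apply]
    · simp only [Matrix.smul_apply, smul_eq_mul, PEquiv.toMatrix_apply]
      exact mul_nonneg (hw_nonneg ρ) (by split_ifs <;> simp)
  exact_mod_cast (div_pos_iff_of_pos_right (by positivity : (0 : ℚ) < D)).1 (hπ.trans_le hle)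

lemma exists_perms_cover_of_sum_eq {M : V → V → ℕ} {D : ℕ}
    (hrow : ∀ u, ∑ v, M u v = D) (hcol : ∀ v, ∑ u, M u v = D) :
    ∃ π : Fin D → Equiv.Perm V, ∀ u v, 0 < M u v → ∃ t, π t u = v := by
  classical
  induction D generalizing M with
  | zero =>
    exact ⟨Fin.elim0, fun u v h => absurd (sum_eq_zero_iff.1 (hrow u) v (mem_univ v)) h.ne'⟩
  | succ D ih =>
    obtain ⟨π, hπ⟩ := exists_perm_pos_of_sum_eq D.succ_pos hrow hcol
    have hle : ∀ u v, (if π u = v then 1 else 0) ≤ M u v := by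
      intro u v
      split_ifs with h
      · exact h ▸ hπ u
      · exact Nat.zero_le _
    obtain ⟨ρ, hρ⟩ := ih (M := fun u v => M u v - if π u = v then 1 else 0)
      (fun u => by rw [sum_tsub_distrib _ fun v _ => hle u v, hrow]; simp)
      (fun v => by
        rw [sum_tsub_distrib _ fun u _ => hle u v, hcol]
        simp [← Equiv.eq_symm_apply])
    refine ⟨Fin.cons π ρ, fun u v huv => ?_⟩
    by_cases h : π u = v
    · exact ⟨0, by simpa using h⟩
    · obtain ⟨t, ht⟩ := hρ u v (by simpa [h] using huv)
      exact ⟨t.succ, by simpa using ht⟩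

lemma exists_le_of_sum_le {M : V → V → ℕ} {D : ℕ}
    (hrow : ∀ u, ∑ v, M u v ≤ D) (hcol : ∀ v, ∑ u, M u v ≤ D) :
    ∃ M' : V → V → ℕ, M ≤ M' ∧ (∀ u, ∑ v, M' u v = D) ∧ ∀ v, ∑ u, M' u v = D := by
  classical
  induction hk : ∑ u, (D - ∑ v, M u v) using Nat.strong_induction_on generalizing M with
  | _ k ih =>
    subst hk
    by_cases hall : ∀ u, ∑ v, M u v = D
    · have hsum : ∑ v, ∑ u, M u v = ∑ _v : V, D := by rw [sum_comm, sum_congr rfl fun u _ => hall u]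
      exact ⟨M, le_rfl, hall, fun v =>
        (sum_eq_sum_iff_of_le fun v _ => hcol v).1 hsum v (mem_univ v)⟩
    push Not at hall
    obtain ⟨a, ha⟩ := hall
    replace ha : ∑ v, M a v < D := (hrow a).lt_of_ne ha
    obtain ⟨b, -, hb⟩ : ∃ b ∈ univ, ∑ u, M u b < D := by
      refine exists_lt_of_sum_lt ?_
      rw [sum_comm]
      exact sum_lt_sum (fun u _ => hrow u) ⟨a, mem_univ a, ha⟩
    let M₁ : V → V → ℕ := fun u v => M u v + if u = a ∧ v = b then 1 else 0
    have hrow₁ : ∀ u, ∑ v, M₁ u v = ∑ v, M u v + if u = a then 1 else 0 := fun u => by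
      by_cases h : u = a <;> simp [M₁, sum_add_distrib, h]
    have hcol₁ : ∀ v, ∑ u, M₁ u v = ∑ u, M u v + if v = b then 1 else 0 := fun v => by
      by_cases h : v = b <;> simp [M₁, sum_add_distrib, h]
    have hrow₁_le : ∀ u, ∑ v, M₁ u v ≤ D := fun u => by
      rw [hrow₁]; split_ifs with h
      · exact h ▸ ha
      · exact hrow u
    have hcol₁_le : ∀ v, ∑ u, M₁ u v ≤ D := fun v => by
      rw [hcol₁]; split_ifs with h
      · exact h ▸ hb
      · exact hcol v
    have hlt : ∑ u, (D - ∑ v, M₁ u v) < ∑ u, (D - ∑ v, M u v) := by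
      refine sum_lt_sum (fun u _ => ?_) ⟨a, mem_univ a, ?_⟩ <;> rw [hrow₁]
      · exact Nat.sub_le_sub_left (Nat.le_add_right _ _) D
      · rw [if_pos rfl]; omega
    obtain ⟨M', hM', h⟩ := ih _ hlt hrow₁_le hcol₁_le rfl
    exact ⟨M', fun u v => (Nat.le_add_right _ _).trans (hM' u v), h⟩

/- König's edge colouring theorem for bipartite graphs: the colour class `t` consists of the pairs
`(u, π t u)` with `u ∈ M t`. -/
lemma exists_partial_perms_of_degree_le (H : V → V → Prop) [DecidableRel H] (D : ℕ)
    (hout : ∀ u, #{v | H u v} ≤ D) (hin : ∀ v, #{u | H u v} ≤ D) :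
    ∃ (π : Fin D → Equiv.Perm V) (M : Fin D → Finset V),
      (∀ t, ∀ u ∈ M t, H u (π t u)) ∧ ∀ u v, H u v → ∃! t, u ∈ M t ∧ π t u = v := by
  classical
  obtain ⟨M', hM', hrow, hcol⟩ := exists_le_of_sum_le (M := fun u v => if H u v then 1 else 0)
    (D := D) (by simpa using hout) (by simpa using hin)
  obtain ⟨π, hπ⟩ := exists_perms_cover_of_sum_eq hrow hcol
  have hcover : ∀ u v, H u v → ∃ t, π t u = v := fun u v huv =>
    hπ u v (Nat.one_le_iff_ne_zero.1 (by simpa [huv] using hM' u v)).bot_lt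
  choose c hc using hcover
  refine ⟨π, fun t => {u | ∃ v, ∃ h : H u v, c u v h = t}, fun t u hu => ?_, fun u v huv => ?_⟩
  · obtain ⟨v, huv, rfl⟩ := (mem_filter.1 hu).2
    rwa [hc]
  · refine ⟨c u v huv, ⟨by simpa using ⟨v, huv, rfl⟩, hc u v huv⟩, ?_⟩
    rintro t ⟨hu, rfl⟩
    obtain ⟨v, huv, rfl⟩ := (mem_filter.1 hu).2
    simp only [hc]

end Koenig

section LinearForest

lemma exists_order_of_injective_key {V : Type*} [Fintype V] {n : ℕ} [NeZero n]
    (hn : Fintype.card V = n) {key : V → ℕ} (hkey : Function.Injective key) :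
    ∃ e : Fin n ≃ V, ∀ u v, key v = key u + 1 → succPerm e u = v := by
  let := LinearOrder.lift' key hkey
  let e : Fin n ≃o V := monoEquivOfFin V hn
  refine ⟨e.toEquiv, fun u v huv => ?_⟩
  obtain ⟨i, rfl⟩ := e.surjective u
  obtain ⟨j, rfl⟩ := e.surjective v
  have hcov : e i ⋖ e j := by
    refine ⟨show key _ < key _ by omega, fun w hiw hwj => ?_⟩
    have : key (e i) < key w := hiw
    have : key w < key (e j) := hwj
    omega
  have hij : (i : ℕ) + 1 = j := Nat.covBy_iff_add_one_eq.1 <|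
    Fin.covBy_iff.1 ((apply_covBy_apply_iff e).1 hcov)
  have hj : j = i + 1 := by
    apply Fin.ext
    have := j.isLt
    rw [Fin.val_add, Fin.val_one', Nat.mod_eq_of_lt (a := 1) (by omega), hij,
      Nat.mod_eq_of_lt (by omega)]
  simpa [hj] using succPerm_apply e.toEquiv i

/- The key of a vertex combines the start of its path with the distance from it. -/
lemma exists_injective_key_of_acyclic {V : Type*} [Finite V] (π : Equiv.Perm V) (A : Finset V)
    (hA : ∀ v, ∃ k : ℕ, π.symm^[k + 1] v ∉ A) :
    ∃ key : V → ℕ, Function.Injective key ∧ ∀ u ∈ A, key (π u) = key u + 1 := by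
  classical
  have := Fintype.ofFinite V
  let dist : V → ℕ := fun v => Nat.find (hA v)
  let start : V → V := fun v => π.symm^[dist v] v
  have hback : ∀ (k : ℕ) (u : V), π.symm^[k + 1] (π u) = π.symm^[k] u := fun k u => by
    rw [Function.iterate_succ_apply, Equiv.symm_apply_apply]
  have hdist : ∀ u ∈ A, dist (π u) = dist u + 1 := by
    intro u hu
    have h : ∃ k : ℕ, π.symm^[k + 1 + 1] (π u) ∉ A := by simpa only [hback] using hA u
    simp only [dist, Nat.find_comp_succ (hA (π u)) h (by simpa using hu), hback]
  have hstart : ∀ u ∈ A, start (π u) = start u := fun u hu => by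
    simp only [start, hdist u hu, hback]
  let idx := Fintype.equivFin V
  set N := univ.sup dist + 1
  have hdist_lt : ∀ v, dist v < N := fun v => Nat.lt_succ_of_le (le_sup (mem_univ v))
  refine ⟨fun v => dist v + N * idx (start v), fun u v huv => ?_, fun u hu => ?_⟩
  · have hdist_eq : dist u = dist v := by
      simpa [Nat.add_mul_mod_self_left, Nat.mod_eq_of_lt (hdist_lt _)] using congrArg (· % N) huv
    have hstart_eq : start u = start v := by
      simp only [hdist_eq] at huv
      exact idx.injective (Fin.ext (Nat.eq_of_mul_eq_mul_left N.pos_of_neZero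
        (Nat.add_left_cancel huv)))
    simp only [start, hdist_eq] at hstart_eq
    exact (π.symm.injective.iterate _) hstart_eq
  · simp only [hdist u hu, hstart u hu]
    ring

lemma exists_order_of_acyclic {V : Type*} [Fintype V] {n : ℕ} [NeZero n]
    (hn : Fintype.card V = n) (π : Equiv.Perm V) (A : Finset V)
    (hA : ∀ v, ∃ k : ℕ, π.symm^[k + 1] v ∉ A) :
    ∃ e : Fin n ≃ V, ∀ u ∈ A, succPerm e u = π u := by
  obtain ⟨key, hkey, hsucc⟩ := exists_injective_key_of_acyclic π A hA
  obtain ⟨e, he⟩ := exists_order_of_injective_key hn hkey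
  exact ⟨e, fun u hu => he u (π u) (hsucc u hu)⟩

end LinearForest

section Probability

variable {α C T W Ω ι : Type*}

lemma exists_forall_notMem_of_card_le [Fintype Ω] [Nonempty Ω] [Fintype ι] {B : ι → Finset Ω}
    {ε : ℝ} (hB : ∀ i, (#(B i) : ℝ) ≤ ε * Fintype.card Ω) (hε : Fintype.card ι * ε < 1) :
    ∃ ω, ∀ i, ω ∉ B i := by
  classical
  have hlt : (#(univ.biUnion B) : ℝ) < #(univ : Finset Ω) := calc
    (#(univ.biUnion B) : ℝ) ≤ ∑ i, (#(B i) : ℝ) := mod_cast card_biUnion_le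
    _ ≤ ∑ _i : ι, ε * Fintype.card Ω := sum_le_sum fun i _ => hB i
    _ = Fintype.card ι * ε * Fintype.card Ω := by simp [mul_assoc]
    _ < #(univ : Finset Ω) := mul_lt_of_lt_one_left (by simp [Fintype.card_pos]) hε
  obtain ⟨ω, -, hω⟩ := exists_mem_notMem_of_card_lt_card (Nat.cast_lt.1 hlt)
  exact ⟨ω, fun i hi => hω (mem_biUnion.2 ⟨i, mem_univ i, hi⟩)⟩

variable [Fintype α] [Fintype C] [DecidableEq C] [Fintype T] [DecidableEq T] [Fintype W]

lemma expect_comp_of_injective [Nonempty α] {F : T → C} (hF : Function.Injective F)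
    (ψ : (T → α) → ℝ) : 𝔼 g : C → α, ψ (g ∘ F) = 𝔼 a, ψ a := by
  classical
  let P : C → Prop := fun x => x ∈ Set.range F
  let e : T ≃ {x // P x} := Equiv.ofInjective F hF
  calc 𝔼 g : C → α, ψ (g ∘ F)
      = 𝔼 x : ({x // P x} → α) × ({x // ¬ P x} → α), ψ (x.1 ∘ e) :=
        Fintype.expect_equiv (Equiv.piEquivPiSubtypeProd P _) _ _ fun g => rfl
    _ = 𝔼 a : {x // P x} → α, 𝔼 _b : {x // ¬ P x} → α, ψ (a ∘ e) := by
        rw [← univ_product_univ, expect_product]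
    _ = 𝔼 a : {x // P x} → α, ψ (a ∘ e) := by simp only [Fintype.expect_const]
    _ = 𝔼 a, ψ a := Fintype.expect_equiv (e.arrowCongr (Equiv.refl α)).symm _ _ fun g => rfl

lemma expect_prod_blocks [Nonempty α] {F : W → T → C}
    (hF : Function.Injective F.uncurry) (φ : (T → α) → ℝ) :
    𝔼 g : C → α, ∏ w, φ (g ∘ F w) = (𝔼 a, φ a) ^ Fintype.card W := by
  classical
  calc 𝔼 g : C → α, ∏ w, φ (g ∘ F w)
      = 𝔼 a : W × T → α, ∏ w, φ fun t => a (w, t) :=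
        expect_comp_of_injective hF fun a => ∏ w, φ fun t => a (w, t)
    _ = 𝔼 a : W → T → α, ∏ w, φ (a w) :=
        Fintype.expect_equiv (Equiv.curry W T α) _ _ fun a => rfl
    _ = (𝔼 a, φ a) ^ Fintype.card W := by
        simp only [Fintype.expect_eq_sum_div_card, div_pow]
        rw [Fintype.card_fun (α := W), Nat.cast_pow]
        congr 1
        simpa using (prod_univ_sum (fun _ : W => univ) fun _ => φ).symm

lemma expect_ite_exp_neg_le [Fintype Ω] [Nonempty Ω] (P : Ω → Prop) [DecidablePred P] {p l : ℝ}
    (hp : p * Fintype.card Ω ≤ #{ω | P ω}) (hl0 : 0 ≤ l) (hl1 : l ≤ 1) :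
    𝔼 ω, (if P ω then Real.exp (-l) else 1) ≤ Real.exp (-(l - l ^ 2) * p) := by
  have hΩ : (0 : ℝ) < Fintype.card Ω := mod_cast Fintype.card_pos
  set x : ℝ := #{ω | P ω} / Fintype.card Ω
  have hx : 𝔼 ω, (if P ω then Real.exp (-l) else 1) = 1 - (1 - Real.exp (-l)) * x := by
    have hsum : ∑ ω, (if P ω then Real.exp (-l) else 1) =
        Fintype.card Ω - (1 - Real.exp (-l)) * #{ω | P ω} := by
      have hsplit : (#{ω | P ω} : ℝ) + #{ω | ¬ P ω} = Fintype.card Ω :=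
        mod_cast card_filter_add_card_filter_not (s := univ) P
      rw [sum_ite, sum_const, sum_const, nsmul_eq_mul, nsmul_eq_mul]
      linarith
    rw [Fintype.expect_eq_sum_div_card, hsum, sub_div, div_self hΩ.ne', mul_div_assoc]
  have hexp : l - l ^ 2 ≤ 1 - Real.exp (-l) := by
    have habs : |-l| ≤ 1 := by rwa [abs_neg, abs_of_nonneg hl0]
    linarith [(abs_le.1 (Real.abs_exp_sub_one_sub_id_le habs)).2, neg_sq l]
  have hmul : (l - l ^ 2) * p ≤ (1 - Real.exp (-l)) * x :=
    (mul_le_mul_of_nonneg_left ((le_div_iff₀ hΩ).2 hp) (by nlinarith)).trans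
      (mul_le_mul_of_nonneg_right hexp (by positivity))
  rw [hx, neg_mul]
  linarith [Real.one_sub_le_exp_neg ((l - l ^ 2) * p)]

/- A Chernoff bound, obtained from the exponential moment with parameter `δ / 2`. -/
lemma card_lower_tail [Nonempty α] {F : W → T → C} (hF : Function.Injective F.uncurry)
    (P : (T → α) → Prop) [DecidablePred P] {p δ : ℝ}
    (hp : p * Fintype.card (T → α) ≤ #{a | P a}) (hδ0 : 0 ≤ δ) (hδ1 : δ ≤ 1) :
    (#{g : C → α | (#{w | P (g ∘ F w)} : ℝ) ≤ (p - δ) * Fintype.card W} : ℝ) ≤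
      Real.exp (-(δ ^ 2 / 4) * Fintype.card W) * Fintype.card (C → α) := by
  set m := Fintype.card W
  set B : Finset (C → α) := {g | (#{w | P (g ∘ F w)} : ℝ) ≤ (p - δ) * m}
  let l := δ / 2
  let φ : (T → α) → ℝ := fun a => if P a then Real.exp (-l) else 1
  have hφ : ∀ a, 0 ≤ φ a := fun a => by positivity
  have hp1 : p ≤ 1 := by
    have hcard : (0 : ℝ) < Fintype.card (T → α) := mod_cast Fintype.card_pos
    have hle : (#{a | P a} : ℝ) ≤ Fintype.card (T → α) := mod_cast card_le_univ _
    exact le_of_mul_le_mul_right (by linarith) hcard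
  have hprod : ∀ g : C → α, ∏ w, φ (g ∘ F w) = Real.exp (-l * #{w | P (g ∘ F w)}) := fun g => by
    simp only [φ]
    rw [prod_ite, prod_const, prod_const_one, mul_one, ← Real.exp_nat_mul, mul_comm]
  have hmarkov : #B * Real.exp (-l * ((p - δ) * m)) ≤ ∑ g : C → α, ∏ w, φ (g ∘ F w) := by
    rw [← nsmul_eq_mul, ← sum_const]
    refine (sum_le_sum fun g hg => ?_).trans
      (sum_le_sum_of_subset_of_nonneg (subset_univ B) fun g _ _ => prod_nonneg fun w _ => hφ _)
    rw [hprod, Real.exp_le_exp]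
    exact mul_le_mul_of_nonpos_left (mem_filter.1 hg).2 (by simp only [l]; linarith)
  have hmoment : ∑ g : C → α, ∏ w, φ (g ∘ F w) ≤
      Real.exp (-(l - l ^ 2) * p * m) * Fintype.card (C → α) := by
    have hE := expect_ite_exp_neg_le P hp (l := l) (by simp only [l]; linarith)
      (by simp only [l]; linarith)
    rw [← card_univ, mul_comm, ← nsmul_eq_mul, ← Fintype.card_smul_expect, card_univ,
      expect_prod_blocks hF, mul_comm _ (m : ℝ), Real.exp_nat_mul]
    gcongr
  refine le_of_mul_le_mul_right (hmarkov.trans (hmoment.trans ?_))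
    (Real.exp_pos (-l * ((p - δ) * m)))
  rw [mul_right_comm (Real.exp _), ← Real.exp_add]
  gcongr
  have hm : (0 : ℝ) ≤ m := m.cast_nonneg
  simp only [l]
  nlinarith [mul_nonneg hm (mul_nonneg (sq_nonneg δ) (sub_nonneg.2 hp1))]

lemma eventually_pow_mul_exp_lt_one (A : ℝ) (k : ℕ) {c : ℝ} (hc : 0 < c) :
    ∀ᶠ n : ℕ in atTop, A * (n : ℝ) ^ k * Real.exp (-c * n) < 1 := by
  have h := (tendsto_pow_const_mul_const_pow_of_abs_lt_one k (r := Real.exp (-c)) (by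
    rwa [abs_of_pos (Real.exp_pos _), Real.exp_lt_one_iff, neg_lt_zero])).const_mul A
  rw [mul_zero] at h
  filter_upwards [h.eventually (gt_mem_nhds one_pos)] with n hn
  rwa [← Real.exp_nat_mul, ← mul_assoc, mul_comm (n : ℝ)] at hn

end Probability

section BalancedColouring

lemma card_few_coloured_le {V α : Type*} [Fintype V] [DecidableEq V] [Fintype α] [DecidableEq α]
    (S : Finset V) (j : α) {δ : ℝ} (hδ0 : 0 ≤ δ) (hδ1 : δ ≤ 1) :
    (#{f : V → α | (#{w ∈ S | f w = j} : ℝ) ≤ (1 / Fintype.card α - δ) * #S} : ℝ) ≤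
      Real.exp (-(δ ^ 2 / 4) * #S) * Fintype.card (V → α) := by
  have : Nonempty α := ⟨j⟩
  have hF : Function.Injective (fun (w : S) (_ : Unit) => (w : V)).uncurry :=
    fun x y h => Prod.ext (Subtype.ext h) rfl
  have hcard : ∀ f : V → α, #{w : S | f w = j} = #{w ∈ S | f w = j} := fun f => by
    rw [univ_eq_attach, filter_attach (fun w => f w = j), card_map, card_attach]
  have hp : (1 / Fintype.card α : ℝ) * Fintype.card (Unit → α) ≤ #{a : Unit → α | a () = j} := by
    have hone : 0 < #{a : Unit → α | a () = j} := card_pos.2 ⟨fun _ => j, by simp⟩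
    rw [Fintype.card_fun, Fintype.card_unit, pow_one,
      one_div_mul_cancel (Nat.cast_ne_zero.2 Fintype.card_ne_zero)]
    exact_mod_cast hone
  simpa only [Function.comp_apply, Fintype.card_coe, hcard] using
    card_lower_tail hF (fun a => a () = j) hp hδ0 hδ1

lemma exists_balanced_colouring (K : ℕ) [NeZero K] {δ c : ℝ} (hδ0 : 0 < δ) (hδ1 : δ ≤ 1)
    (hc : 0 < c) :
    ∃ n₀ : ℕ, ∀ (V : Type*) [Fintype V] (N : V → Finset V),
      n₀ ≤ Fintype.card V → (∀ v, c * Fintype.card V ≤ #(N v)) →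
      ∃ f : V → ZMod K, ∀ v j, (1 / K - δ) * #(N v) ≤ #{w ∈ N v | f w = j} ∧
        #{w ∈ N v | f w = j} ≤ (1 / K + δ) * #(N v) := by
  have hK : (1 : ℝ) ≤ K := mod_cast NeZero.one_le
  have hδK : δ / K ≤ δ := div_le_self hδ0.le hK
  obtain ⟨n₀, hn₀⟩ := eventually_atTop.1 (eventually_pow_mul_exp_lt_one K 1
    (c := (δ / K) ^ 2 / 4 * c) (by positivity))
  refine ⟨n₀, fun V _ N hn hN => ?_⟩
  classical
  have hexp : ∀ v, Real.exp (-((δ / K) ^ 2 / 4) * #(N v)) ≤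
      Real.exp (-((δ / K) ^ 2 / 4 * c) * Fintype.card V) := fun v => by
    rw [Real.exp_le_exp, ← neg_mul, mul_assoc, neg_mul, neg_mul, neg_le_neg_iff]
    exact mul_le_mul_of_nonneg_left (hN v) (by positivity)
  obtain ⟨f, hf⟩ := exists_forall_notMem_of_card_le (ι := V × ZMod K)
    (B := fun i => {f : V → ZMod K |
      (#{w ∈ N i.1 | f w = i.2} : ℝ) ≤ (1 / Fintype.card (ZMod K) - δ / K) * #(N i.1)})
    (fun i => (card_few_coloured_le (N i.1) i.2 (by positivity) (hδK.trans hδ1)).trans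
      (mul_le_mul_of_nonneg_right (hexp i.1) (Nat.cast_nonneg _)))
    (by simpa [mul_comm] using hn₀ _ hn)
  have hlower : ∀ v j, (1 / K - δ / K) * #(N v) ≤ #{w ∈ N v | f w = j} := fun v j => by
    simpa using (not_le.1 (by simpa using hf (v, j))).le
  refine ⟨f, fun v j => ⟨(hlower v j).trans' (by gcongr), ?_⟩⟩
  have hsum : (#(N v) : ℝ) = #{w ∈ N v | f w = j} +
      ∑ i ∈ univ.erase j, (#{w ∈ N v | f w = i} : ℝ) := by
    rw [add_sum_erase univ (fun i => (#{w ∈ N v | f w = i} : ℝ)) (mem_univ j)]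
    exact_mod_cast card_eq_sum_card_fiberwise fun w _ => mem_coe.2 (mem_univ (f w))
  have hothers : (K - 1) * ((1 / K - δ / K) * #(N v)) ≤
      ∑ i ∈ univ.erase j, (#{w ∈ N v | f w = i} : ℝ) := by
    have h := card_nsmul_le_sum (univ.erase j) (fun i => (#{w ∈ N v | f w = i} : ℝ)) _
      fun i _ => hlower v i
    rwa [card_erase_of_mem (mem_univ j), card_univ, ZMod.card, nsmul_eq_mul,
      Nat.cast_pred (NeZero.pos K)] at h
  have hexpand : (1 / K + δ) * #(N v) =
      #(N v) - (K - 1) * ((1 / K - δ / K) * #(N v)) + δ / K * #(N v) := by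
    field_simp; ring
  have hnonneg : 0 ≤ δ / K * #(N v) := by positivity
  linarith

end BalancedColouring

/-- `v` is an inner vertex of the linear forest with edge set `A`, whose edges join consecutive
elements of the cyclic order `e`: both neighbours of `v` in the order are joined to it. -/
def IsInner {V : Type*} {n : ℕ} [NeZero n] (e : Fin n ≃ V) (A : Finset (Sym2 V)) (v : V) : Prop :=
  s(v, succPerm e v) ∈ A ∧ s((succPerm e).symm v, v) ∈ A

instance {V : Type*} [DecidableEq V] {n : ℕ} [NeZero n] (e : Fin n ≃ V) (A : Finset (Sym2 V)) :
    DecidablePred (IsInner e A) :=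
  fun _ => inferInstanceAs (Decidable (_ ∧ _))

/-- Pairwise edge-disjoint linear forests in `G`: the forest with index `i` is given by its edge set
`F i`, and its paths consist of consecutive elements of the cyclic order `e i`. -/
structure IsLinearForestPacking {ι V : Type*} [DecidableEq V] {n : ℕ} [NeZero n]
    (G : SimpleGraph V) (F : ι → Finset (Sym2 V)) (e : ι → Fin n ≃ V) : Prop where
  subset_cyclicEdges : ∀ i, F i ⊆ cyclicEdges (e i)
  mem_edgeSet : ∀ i, ∀ z ∈ F i, z ∈ G.edgeSet
  disjoint : Pairwise fun i j => Disjoint (F i) (F j)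

section ColouredSteps

variable {V : Type*} {K D : ℕ}

lemma card_filter_natCast_eq_le (D : ℕ) [NeZero K] (r : ZMod K) :
    #{t : Fin D | ((t : ℕ) : ZMod K) = r} ≤ D / K + 1 := by
  rw [← card_range (D / K + 1)]
  refine card_le_card_of_injOn (fun t => (t : ℕ) / K) (fun t _ => ?_) fun t ht t' ht' h => ?_
  · exact mem_coe.2 (mem_range_succ_iff.2 (Nat.div_le_div_right t.isLt.le))
  · have hmod : (t : ℕ) % K = t' % K := (ZMod.natCast_eq_natCast_iff' _ _ _).1
      ((mem_filter.1 ht).2.trans (mem_filter.1 ht').2.symm)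
    have hdiv : (t : ℕ) / K = t' / K := h
    rw [Fin.ext_iff, ← Nat.div_add_mod (t : ℕ) K, ← Nat.div_add_mod (t' : ℕ) K, hdiv, hmod]

lemma card_filter_notMem_or_natCast_eq_le [NeZero K] {a : ℕ} {S : Finset (Fin D)} (hS : a ≤ #S)
    (r : ZMod K) : #{t | t ∉ S ∨ ((t : ℕ) : ZMod K) = r} ≤ D - a + (D / K + 1) := by
  rw [filter_or, filter_notMem_eq_sdiff, ← compl_eq_univ_sdiff]
  refine (card_union_le _ _).trans (add_le_add ?_ (card_filter_natCast_eq_le D r))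
  rw [card_compl, Fintype.card_fin]
  exact Nat.sub_le_sub_left hS D

lemma exists_iterate_symm_notMem [Fact K.Prime] {π : Equiv.Perm V} {A : Finset V} {f : V → ZMod K}
    {s r : ZMod K} (hs : s ≠ 0) (hstep : ∀ u ∈ A, f (π u) = f u + s) (hr : ∀ u ∈ A, f u ≠ r)
    (v : V) : ∃ k : ℕ, π.symm^[k + 1] v ∉ A := by
  by_contra! hcon
  have hf : ∀ k : ℕ, f (π.symm^[k] v) = f v - k * s := by
    intro k
    induction k with
    | zero => simp
    | succ k ih =>
      have h := hstep _ (hcon k)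
      rw [Function.iterate_succ_apply', Equiv.apply_symm_apply, ih] at h
      rw [Function.iterate_succ_apply']
      push_cast
      linear_combination -h
  obtain ⟨k, hk⟩ : ∃ k : ℕ, ((k + 1 : ℕ) : ZMod K) = (f v - r) * s⁻¹ := by
    refine ⟨((f v - r) * s⁻¹).val + (K - 1), ?_⟩
    rw [add_assoc, Nat.sub_add_cancel NeZero.one_le, Nat.cast_add, ZMod.natCast_zmod_val,
      ZMod.natCast_self, add_zero]
  exact hr _ (hcon k) (by rw [hf, hk, inv_mul_cancel_right₀ hs, sub_sub_cancel])

variable [Fintype V] [DecidableEq V]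

/- Each class of König's edge colouring is broken into paths by removing the arcs which leave the
vertices of one colour; the colour to be removed runs cyclically through `ZMod K`. -/
lemma exists_acyclic_partial_perms [Fact K.Prime] {f : V → ZMod K} {s : ZMod K} (hs : s ≠ 0)
    {H : V → V → Prop} [DecidableRel H] (hH : ∀ u v, H u v → f v = f u + s) {a : ℕ}
    (hout : ∀ u, a ≤ #{v | H u v} ∧ #{v | H u v} ≤ D)
    (hin : ∀ v, a ≤ #{u | H u v} ∧ #{u | H u v} ≤ D) :
    ∃ (π : Fin D → Equiv.Perm V) (A : Fin D → Finset V), (∀ t, ∀ u ∈ A t, H u (π t u)) ∧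
      (∀ u t t', u ∈ A t → u ∈ A t' → π t u = π t' u → t = t') ∧
      (∀ t v, ∃ k : ℕ, (π t).symm^[k + 1] v ∉ A t) ∧
      ∀ v, #{t | v ∉ A t} ≤ D - a + (D / K + 1) ∧
        #{t | (π t).symm v ∉ A t} ≤ D - a + (D / K + 1) := by
  obtain ⟨π, M, hM, hcover⟩ :=
    exists_partial_perms_of_degree_le H D (fun u => (hout u).2) fun v => (hin v).2
  refine ⟨π, fun t => {u ∈ M t | f u ≠ ((t : ℕ) : ZMod K)},
    fun t u hu => hM t u (mem_filter.1 hu).1, fun u t t' hu hu' h => ?_, fun t => ?_,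
    fun v => ⟨?_, ?_⟩⟩
  · have hut' := (mem_filter.1 hu').1
    exact (hcover u _ (hM t' u hut')).unique ⟨(mem_filter.1 hu).1, h⟩ ⟨hut', rfl⟩
  · exact exists_iterate_symm_notMem hs (fun u hu => hH _ _ (hM t u (mem_filter.1 hu).1))
      fun u hu => (mem_filter.1 hu).2
  · have hS : univ.filter (H v) ⊆ image (fun t => π t v) {t | v ∈ M t} := fun w hw => by
      obtain ⟨t, ht, -⟩ := hcover v w (mem_filter.1 hw).2
      exact mem_image.2 ⟨t, by simpa using ht.1, ht.2⟩
    refine (card_le_card fun t ht => ?_).trans (card_filter_notMem_or_natCast_eq_le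
      ((hout v).1.trans ((card_le_card hS).trans card_image_le)) (f v))
    simp only [mem_filter, mem_univ, true_and] at ht ⊢
    tauto
  · have hS : univ.filter (H · v) ⊆ image (fun t => (π t).symm v) {t | (π t).symm v ∈ M t} :=
      fun u hu => by
        obtain ⟨t, ⟨ht, rfl⟩, -⟩ := hcover u v (mem_filter.1 hu).2
        exact mem_image.2 ⟨t, by simpa using ht, by simp⟩
    have hf : ∀ t, (π t).symm v ∈ M t → f ((π t).symm v) = f v - s := fun t ht => by
      have h := hH _ _ (hM t _ ht)
      rw [Equiv.apply_symm_apply] at h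
      exact eq_sub_of_add_eq h.symm
    refine (card_le_card fun t ht => ?_).trans (card_filter_notMem_or_natCast_eq_le
      ((hin v).1.trans ((card_le_card hS).trans card_image_le)) (f v - s))
    simp only [mem_filter, mem_univ, true_and] at ht ⊢
    by_contra! hcon
    exact ht ⟨hcon.1, fun h => hcon.2 (h ▸ hf t hcon.1)⟩

end ColouredSteps

section LinearForestPacking

lemma card_filter_prod_le {α β : Type*} [Fintype α] [Fintype β] (P : α × β → Prop)
    [DecidablePred P] {b : ℕ} (hb : ∀ x, #{y | P (x, y)} ≤ b) :
    #{i | P i} ≤ Fintype.card α * b := by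
  simp only [card_filter, Fintype.sum_prod_type] at hb ⊢
  exact (sum_le_sum fun x _ => hb x).trans (by simp)

variable {V : Type*} [DecidableEq V] {n : ℕ} [NeZero n]

lemma isInner_image_mk {π : Equiv.Perm V} {A : Finset V} {e : Fin n ≃ V}
    (he : ∀ u ∈ A, succPerm e u = π u) {v : V} (hv : v ∈ A) (hv' : π.symm v ∈ A) :
    IsInner e (A.image fun u => s(u, π u)) v := by
  have hpred : (succPerm e).symm v = π.symm v := by
    rw [Equiv.symm_apply_eq, he _ hv', Equiv.apply_symm_apply]
  refine ⟨mem_image.2 ⟨v, hv, by rw [he v hv]⟩, mem_image.2 ⟨π.symm v, hv', ?_⟩⟩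
  rw [hpred, Equiv.apply_symm_apply]

lemma disjoint_image_mk {Γ : Type*} [AddCommGroup Γ] {f : V → Γ} {s s' : Γ} {π π' : V → V}
    {A A' : Finset V} (hA : ∀ u ∈ A, f (π u) = f u + s) (hA' : ∀ u ∈ A', f (π' u) = f u + s')
    (hs : s + s' ≠ 0) (hne : s = s' → ∀ u ∈ A, u ∈ A' → π u ≠ π' u) :
    Disjoint (A.image fun u => s(u, π u)) (A'.image fun u => s(u, π' u)) := by
  refine disjoint_left.2 fun z hz hz' => ?_
  obtain ⟨u, hu, rfl⟩ := mem_image.1 hz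
  obtain ⟨w, hw, hwu⟩ := mem_image.1 hz'
  have hfw := hA' w hw
  rcases Sym2.eq_iff.1 hwu with ⟨rfl, hπ⟩ | ⟨hw', hπ⟩
  · rw [hπ, hA _ hu] at hfw
    exact hne (add_left_cancel hfw) _ hu hw hπ.symm
  · rw [hπ, hw', hA _ hu, add_assoc, left_eq_add] at hfw
    exact hs hfw

variable [Fintype V]

/- The arcs which raise the colour by `s` are decomposed separately for each `s = 1, …, h`; since
`K = 2 * h + 1`, an edge joining different colours is an arc for exactly one `s`. -/
lemma exists_isLinearForestPacking_of_colouring (hn : Fintype.card V = n) (G : SimpleGraph V)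
    [DecidableRel G.Adj] {h K a D : ℕ} (hK : K = 2 * h + 1) [Fact K.Prime] (f : V → ZMod K)
    (hf : ∀ v j, a ≤ #{w | G.Adj v w ∧ f w = j} ∧ #{w | G.Adj v w ∧ f w = j} ≤ D) :
    ∃ (F : Fin h × Fin D → Finset (Sym2 V)) (e : Fin h × Fin D → Fin n ≃ V),
      IsLinearForestPacking G F e ∧
      ∀ v, #{i | ¬ IsInner (e i) (F i) v} ≤ 2 * (h * (D - a + (D / K + 1))) := by
  let step : Fin h → ZMod K := fun s => ((s.val + 1 : ℕ) : ZMod K)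
  have hstep_ne : ∀ s, step s ≠ 0 := fun s hs =>
    absurd (Nat.le_of_dvd (by omega) ((ZMod.natCast_eq_zero_iff _ _).1 hs)) (by omega)
  have hstep_inj : ∀ s s', step s = step s' → s = s' := fun s s' hs => by
    rw [ZMod.natCast_eq_natCast_iff', Nat.mod_eq_of_lt (by omega),
      Nat.mod_eq_of_lt (by omega)] at hs
    exact Fin.ext (Nat.succ_injective hs)
  have hstep_add : ∀ s s', step s + step s' ≠ 0 := fun s s' hs => by
    rw [← Nat.cast_add, ZMod.natCast_eq_zero_iff] at hs
    exact absurd (Nat.le_of_dvd (by omega) hs) (by omega)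
  let H : Fin h → V → V → Prop := fun s u v => G.Adj u v ∧ f v = f u + step s
  have hin : ∀ s v, univ.filter (H s · v) =
      univ.filter fun w => G.Adj v w ∧ f w = f v - step s := fun s v => by
    simp only [H, G.adj_comm _ v, eq_sub_iff_add_eq, eq_comm (a := f v)]
  choose π A hAH hAinj hacyc hmiss using fun s => exists_acyclic_partial_perms (hstep_ne s)
    (H := H s) (fun u v huv => huv.2) (fun u => hf u _) fun v => (hin s v).symm ▸ hf v _
  choose e he using fun i : Fin h × Fin D => exists_order_of_acyclic hn _ _ (hacyc i.1 i.2)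
  refine ⟨fun i => (A i.1 i.2).image fun u => s(u, π i.1 i.2 u), e, ⟨fun i z hz => ?_,
    fun i z hz => ?_, fun i j hij => disjoint_image_mk (fun u hu => (hAH _ _ u hu).2)
      (fun u hu => (hAH _ _ u hu).2) (hstep_add i.1 j.1) fun hs u hu hu' hπ => hij ?_⟩,
    fun v => ?_⟩
  · obtain ⟨u, hu, rfl⟩ := mem_image.1 hz
    exact he i u hu ▸ mk_succPerm_mem_cyclicEdges _ u
  · obtain ⟨u, hu, rfl⟩ := mem_image.1 hz
    exact (hAH _ _ u hu).1
  · have hij := hstep_inj _ _ hs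
    rw [← hij] at hu' hπ
    exact Prod.ext hij (hAinj _ _ _ _ hu hu' hπ)
  · have hsub : univ.filter (fun i => ¬ IsInner (e i)
          ((A i.1 i.2).image fun u => s(u, π i.1 i.2 u)) v) ⊆
        univ.filter (fun i => v ∉ A i.1 i.2) ∪
          univ.filter fun i => (π i.1 i.2).symm v ∉ A i.1 i.2 := fun i hi => by
      simp only [mem_union, mem_filter, mem_univ, true_and] at hi ⊢
      by_contra! hcon
      exact hi (isInner_image_mk (he i) hcon.1 hcon.2)
    refine (card_le_card hsub).trans ((card_union_le _ _).trans ?_)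
    have hout := card_filter_prod_le (fun i => v ∉ A i.1 i.2) fun s => (hmiss s v).1
    have hin := card_filter_prod_le (fun i => (π i.1 i.2).symm v ∉ A i.1 i.2) fun s => (hmiss s v).2
    rw [Fintype.card_fin] at hout hin
    omega

lemma two_mul_mul_sub_add_div_le {ε δ x d : ℝ} {K h a D : ℕ} (hK : K = 2 * h + 1)
    (hδ0 : 0 ≤ δ) (hδ : 8 * K * δ = ε) (hεK : 4 ≤ ε * K) (hKx : 8 * K ≤ ε * x) (hd0 : 0 ≤ d)
    (hdx : d ≤ x) (ha : (1 / K - δ) * d ≤ a) (hD : D ≤ (1 / K + δ) * d) :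
    ((2 * (h * (D - a + (D / K + 1))) : ℕ) : ℝ) ≤ ε * x := by
  have hh : (2 * h : ℝ) ≤ K := by rw [hK]; push_cast; linarith
  have hK1 : (1 : ℝ) ≤ K := by rw [hK]; push_cast; linarith [(h.cast_nonneg : (0 : ℝ) ≤ h)]
  have hsub : ((D - a : ℕ) : ℝ) ≤ 2 * δ * d := by
    rcases le_total a D with haD | haD
    · rw [Nat.cast_sub haD]
      linarith
    · rw [Nat.sub_eq_zero_of_le haD, Nat.cast_zero]
      positivity
  have hdiv : ((D / K : ℕ) : ℝ) ≤ (1 / K + δ) * d / K :=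
    Nat.cast_div_le.trans (div_le_div_of_nonneg_right hD (by positivity))
  have hdK : d / K ≤ ε * x / 4 := by
    rw [div_le_iff₀ (by positivity)]
    nlinarith
  have hδd : 8 * (K * δ * d) ≤ ε * x := by
    have hε0 : 0 ≤ ε := hδ ▸ by positivity
    linarith [mul_le_mul_of_nonneg_left hdx hε0, congrArg (· * d) hδ]
  have hδd' : δ * d ≤ K * δ * d := by
    rw [mul_assoc]
    exact le_mul_of_one_le_left (by positivity) hK1
  calc ((2 * (h * (D - a + (D / K + 1))) : ℕ) : ℝ)
      = 2 * h * ((D - a : ℕ) + ((D / K : ℕ) + 1)) := by push_cast; ring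
    _ ≤ K * (2 * δ * d + ((1 / K + δ) * d / K + 1)) := by gcongr
    _ = 2 * (K * δ * d) + d / K + δ * d + K := by field_simp; ring
    _ ≤ ε * x := by linarith

lemma abs_mul_sub_half_le {ε δ x d : ℝ} {K h D : ℕ} (hK : K = 2 * h + 1) (hδ0 : 0 ≤ δ)
    (hδ : 8 * K * δ = ε) (hεK : 4 ≤ ε * K) (hKx : 8 * K ≤ ε * x) (hd0 : 0 ≤ d) (hdx : d ≤ x)
    (hD : D ≤ (1 / K + δ) * d) (hD' : (1 / K + δ) * d ≤ D + 1) :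
    |(h * D : ℝ) - d / 2| ≤ ε * x := by
  have hh : (K : ℝ) = 2 * h + 1 := mod_cast hK
  have hh0 : (0 : ℝ) ≤ h := h.cast_nonneg
  have hK0 : (0 : ℝ) < K := by linarith
  have hε0 : 0 ≤ ε := hδ ▸ by positivity
  have hεd : ε * d ≤ ε * x := mul_le_mul_of_nonneg_left hdx hε0
  have hdK : d / K ≤ ε * x / 4 := by
    rw [div_le_iff₀ (by positivity)]
    nlinarith
  have hdK0 : 0 ≤ d / K := by positivity
  have hδd : 0 ≤ δ * d := by positivity
  have hhd : h * ((1 / K + δ) * d) = d / 2 - d / K / 2 + h * δ * d := by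
    rw [show (h : ℝ) = (K - 1) / 2 by linarith]
    field_simp
  have hhδ : h * δ * d ≤ ε * d / 16 := by
    rw [← hδ, hh]
    linarith
  have hhδ0 : 0 ≤ h * δ * d := by positivity
  have hub := mul_le_mul_of_nonneg_left hD hh0
  have hlb := mul_le_mul_of_nonneg_left hD' hh0
  rw [abs_le]
  constructor <;> linarith

lemma exists_isLinearForestPacking {ε : ℝ} (hε0 : 0 < ε) (hε1 : ε ≤ 1) :
    ∃ n₀ : ℕ, ∀ (V : Type*) [Fintype V] [DecidableEq V] (n : ℕ) [NeZero n] (G : SimpleGraph V)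
      [DecidableRel G.Adj] (d : ℕ), Fintype.card V = n → n₀ ≤ n → G.IsRegularOfDegree d →
      (n : ℝ) / 2 ≤ d →
      ∃ (ι : Type) (_ : Fintype ι) (F : ι → Finset (Sym2 V)) (e : ι → Fin n ≃ V),
        IsLinearForestPacking G F e ∧
        (∀ v, (#{i | ¬ IsInner (e i) (F i) v} : ℝ) ≤ ε * n) ∧
        |(Fintype.card ι : ℝ) - d / 2| ≤ ε * n := by
  obtain ⟨K, hKε, hKp⟩ := Nat.exists_infinite_primes (max 3 ⌈4 / ε⌉₊)
  obtain ⟨h, hK⟩ : Odd K := hKp.odd_of_ne_two (by omega)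
  have : Fact K.Prime := ⟨hKp⟩
  have hK0 : (0 : ℝ) < K := mod_cast hKp.pos
  have hεK : 4 ≤ ε * K := by
    rw [← div_le_iff₀' hε0]
    exact Nat.ceil_le.1 ((le_max_right _ _).trans hKε)
  obtain ⟨δ, hδ⟩ : ∃ δ : ℝ, 8 * K * δ = ε := ⟨ε / (8 * K), by field_simp⟩
  have hδ0 : 0 < δ := pos_of_mul_pos_right (hδ ▸ hε0) (by positivity)
  have hδ1 : δ ≤ 1 := by nlinarith [(mod_cast hKp.one_lt.le : (1 : ℝ) ≤ K)]
  obtain ⟨n₀, hn₀⟩ := exists_balanced_colouring K hδ0 hδ1 (c := 1 / 2) (by norm_num)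
  refine ⟨max n₀ ⌈8 * K / ε⌉₊, fun V _ _ n _ G _ d hn hn' hG hd => ?_⟩
  have hdeg : ∀ v, #(G.neighborFinset v) = d := hG
  obtain ⟨f, hf⟩ := hn₀ V (fun v => G.neighborFinset v) (hn ▸ (le_max_left _ _).trans hn')
    fun v => by rw [hdeg, hn]; linarith
  simp only [hdeg] at hf
  simp only [SimpleGraph.neighborFinset_eq_filter, filter_filter] at hf
  have hKn : 8 * K ≤ ε * n := by
    rw [← div_le_iff₀' hε0]
    exact Nat.ceil_le.1 ((le_max_right _ _).trans hn')
  have hdn : (d : ℝ) ≤ n := by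
    obtain ⟨v⟩ : Nonempty V := Fintype.card_pos_iff.1 (hn ▸ NeZero.pos n)
    rw [← hn, ← hdeg v]
    exact mod_cast card_le_univ _
  have hD : (⌊(1 / K + δ) * d⌋₊ : ℝ) ≤ (1 / K + δ) * d := Nat.floor_le (by positivity)
  obtain ⟨F, e, hFe, hmiss⟩ := exists_isLinearForestPacking_of_colouring hn G hK f
    (a := ⌈(1 / K - δ) * d⌉₊) (D := ⌊(1 / K + δ) * d⌋₊)
    fun v j => ⟨Nat.ceil_le.2 (hf v j).1, Nat.le_floor (hf v j).2⟩
  refine ⟨_, inferInstance, F, e, hFe, fun v => (Nat.cast_le.2 (hmiss v)).trans ?_, ?_⟩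
  · exact two_mul_mul_sub_add_div_le hK hδ0.le hδ hεK hKn d.cast_nonneg hdn (Nat.le_ceil _) hD
  · simpa using abs_mul_sub_half_le hK hδ0.le hδ hεK hKn d.cast_nonneg hdn hD
      (Nat.lt_floor_add_one _).le

end LinearForestPacking

section RandomColouring

variable {ι W P : Type*} [Fintype W]

lemma exists_independent (S : Finset W) (r : W → W → Prop) [DecidableRel r]
    (hrefl : ∀ w, r w w) (hsymm : ∀ w w', r w w' → r w' w) {k : ℕ} (hk : ∀ w, #{w' | r w w'} ≤ k) :
    ∃ T ⊆ S, (∀ w ∈ T, ∀ w' ∈ T, r w w' → w = w') ∧ #S ≤ k * #T := by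
  classical
  obtain ⟨T, hT, hmax⟩ := exists_max_image
    (S.powerset.filter fun T => ∀ w ∈ T, ∀ w' ∈ T, r w w' → w = w') card ⟨∅, by simp⟩
  rw [mem_filter, mem_powerset] at hT
  obtain ⟨hTS, hind⟩ := hT
  have hcover : S ⊆ T.biUnion fun w => {w' | r w w'} := by
    intro w hw
    by_contra hfree
    simp only [mem_biUnion, mem_filter_univ, not_exists, not_and] at hfree
    have hwT : w ∉ T := fun h => hfree w h (hrefl w)
    have hle := hmax (insert w T) (mem_filter.2 ⟨mem_powerset.2 (insert_subset hw hTS), by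
      intro a ha b hb hab
      rcases mem_insert.1 ha with rfl | haT <;> rcases mem_insert.1 hb with rfl | hbT
      · rfl
      · exact absurd (hsymm _ _ hab) (hfree b hbT)
      · exact absurd hab (hfree a haT)
      · exact hind a haT b hbT hab⟩)
    rw [card_insert_of_notMem hwT] at hle
    omega
  refine ⟨T, hTS, hind, ?_⟩
  calc #S ≤ ∑ w ∈ T, #{w' | r w w'} := (card_le_card hcover).trans card_biUnion_le
    _ ≤ #T • k := sum_le_card_nsmul _ _ _ fun w _ => hk w
    _ = k * #T := mul_comm _ _

variable [DecidableEq ι] {q : ℕ} [NeZero q]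

lemma card_few_monochromatic_of_blocks [Fintype ι] {U : Type*} [Fintype U]
    (a b : W → ι) (c : Fin q) {T : Finset W} {A : T → U → ι} (hU : Fintype.card U ≤ 2)
    (hA : Function.Injective A.uncurry)
    (hAc : ∀ w (g : ι → Fin q), (∀ t, g (A w t) = c) → g (a w) = c ∧ g (b w) = c)
    (hT : Fintype.card W ≤ 32 * #T) :
    (#{g : ι → Fin q | (#{w | g (a w) = c ∧ g (b w) = c} : ℝ) ≤
        1 / (64 * (q : ℝ) ^ 2) * Fintype.card W} : ℝ) ≤
      Real.exp (-(1 / (512 * (q : ℝ) ^ 4)) * Fintype.card W) * Fintype.card (ι → Fin q) := by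
  classical
  have hq : (1 : ℝ) ≤ q := mod_cast NeZero.one_le
  have hT' : (Fintype.card W : ℝ) ≤ 32 * #T := mod_cast hT
  have htail := card_lower_tail (p := 1 / (q : ℝ) ^ 2) (δ := 1 / (2 * (q : ℝ) ^ 2)) hA
    (fun u : U → Fin q => ∀ t, u t = c) (by
      have hall : univ.filter (fun u : U → Fin q => ∀ t, u t = c) = {fun _ => c} := by
        ext u
        simp [funext_iff]
      rw [hall, card_singleton, Fintype.card_fun, Fintype.card_fin, Nat.cast_pow, Nat.cast_one,
        one_div_mul_eq_div, div_le_one (by positivity)]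
      exact pow_le_pow_right₀ hq hU)
    (by positivity) (by
      rw [div_le_one (by positivity)]
      nlinarith)
  rw [Fintype.card_coe] at htail
  refine le_trans (Nat.cast_le.2 (card_le_card fun g hg => ?_)) (htail.trans ?_)
  · rw [mem_filter_univ] at hg ⊢
    have hle : #{w : T | ∀ t, g (A w t) = c} ≤ #{w | g (a w) = c ∧ g (b w) = c} := by
      refine card_le_card_of_injOn Subtype.val (fun w hw => ?_) Subtype.val_injective.injOn
      simp only [coe_filter, mem_univ, true_and, Set.mem_ofPred_eq] at hw ⊢
      exact hAc w g hw
    calc (#{w : T | ∀ t, g (A w t) = c} : ℝ)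
        ≤ 1 / (64 * (q : ℝ) ^ 2) * Fintype.card W := (Nat.cast_le.2 hle).trans hg
      _ ≤ 1 / (64 * (q : ℝ) ^ 2) * (32 * #T) := by gcongr
      _ = (1 / (q : ℝ) ^ 2 - 1 / (2 * (q : ℝ) ^ 2)) * #T := by field_simp; ring
  · have hδ : (1 / (2 * (q : ℝ) ^ 2)) ^ 2 / 4 = 32 * (1 / (512 * (q : ℝ) ^ 4)) := by
      field_simp
      norm_num
    have hc : 0 ≤ 1 / (512 * (q : ℝ) ^ 4) := by positivity
    rw [hδ]
    gcongr ?_ * _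
    exact Real.exp_le_exp.2 (by linarith [mul_le_mul_of_nonneg_left hT' hc])

/- The pairs with `a w = b w` and those with `a w ≠ b w` are treated separately; within the larger
of the two kinds, an independent family of pairs is coloured independently. -/
lemma card_few_monochromatic [Fintype ι] {a b : W → ι} (ha : ∀ i, #{w | a w = i} ≤ 4)
    (hb : ∀ i, #{w | b w = i} ≤ 4) (c : Fin q) :
    (#{g : ι → Fin q | (#{w | g (a w) = c ∧ g (b w) = c} : ℝ) ≤
        1 / (64 * (q : ℝ) ^ 2) * Fintype.card W} : ℝ) ≤
      Real.exp (-(1 / (512 * (q : ℝ) ^ 4)) * Fintype.card W) * Fintype.card (ι → Fin q) := by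
  classical
  let r : W → W → Prop := fun w w' => (a w' = a w ∨ a w' = b w) ∨ b w' = a w ∨ b w' = b w
  have hr : ∀ w, #{w' | r w w'} ≤ 16 := fun w => by
    simp only [r, filter_or]
    have := card_union_le (univ.filter (a · = a w) ∪ univ.filter (a · = b w))
      (univ.filter (b · = a w) ∪ univ.filter (b · = b w))
    have := card_union_le (univ.filter (a · = a w)) (univ.filter (a · = b w))
    have := card_union_le (univ.filter (b · = a w)) (univ.filter (b · = b w))
    linarith [ha (a w), ha (b w), hb (a w), hb (b w)]
  have hsymm : ∀ w w', r w w' → r w' w := fun w w' h => by grind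
  have hsplit := card_filter_add_card_filter_not (s := (univ : Finset W)) (fun w => a w = b w)
  rw [card_univ] at hsplit
  rcases le_total #{w | ¬ a w = b w} #{w | a w = b w} with hle | hle
  · obtain ⟨T, hT, hind, hcard⟩ := exists_independent {w | a w = b w} r (by simp [r]) hsymm hr
    refine card_few_monochromatic_of_blocks (U := Unit) (T := T) (A := fun w _ => a w) a b c
      (by simp) ?_ (fun w g hg => ?_) (by omega)
    · rintro ⟨w, _⟩ ⟨w', _⟩ h
      exact Prod.ext (Subtype.ext (hind _ w.2 _ w'.2 (Or.inl (Or.inl h.symm)))) rfl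
    · have hab := (mem_filter.1 (hT w.2)).2
      exact ⟨hg (), hab ▸ hg ()⟩
  · obtain ⟨T, hT, hind, hcard⟩ := exists_independent {w | ¬ a w = b w} r (by simp [r]) hsymm hr
    refine card_few_monochromatic_of_blocks (U := Bool) (T := T)
      (A := fun w t => if t then a w else b w) a b c (by simp) ?_
      (fun w g hg => ⟨by simpa using hg true, by simpa using hg false⟩) (by omega)
    rintro ⟨w, t⟩ ⟨w', t'⟩ h
    simp only [Function.uncurry_apply_pair] at h
    obtain rfl : w = w' := Subtype.ext (hind _ w.2 _ w'.2 (by grind))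
    have hab : a w ≠ b w := (mem_filter.1 (hT w.2)).2
    cases t <;> cases t' <;> simp_all [eq_comm]

lemma card_not_inherit_le [Fintype ι] {A B : W → Finset ι} (hA : ∀ i, #{w | i ∈ A w} ≤ 4)
    (hB : ∀ i, #{w | i ∈ B w} ≤ 4) {N : ℝ} (c : Fin q)
    (hN : N ≤ #{w | (A w).Nonempty ∧ (B w).Nonempty}) :
    (#{g : ι → Fin q | (#{w | (∃ i ∈ A w, g i = c) ∧ ∃ i ∈ B w, g i = c} : ℝ) <
        1 / (64 * (q : ℝ) ^ 2) * N} : ℝ) ≤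
      Real.exp (-(1 / (512 * (q : ℝ) ^ 4)) * N) * Fintype.card (ι → Fin q) := by
  classical
  let S : Finset W := {w | (A w).Nonempty ∧ (B w).Nonempty}
  choose a ha using fun w : S => (mem_filter.1 w.2).2.1
  choose b hb using fun w : S => (mem_filter.1 w.2).2.2
  have hfib : ∀ {D : W → Finset ι}, (∀ i, #{w | i ∈ D w} ≤ 4) → ∀ {d : S → ι},
      (∀ w, d w ∈ D w.1) → ∀ i, #{w | d w = i} ≤ 4 := fun hD _ hd i =>
    (card_le_card_of_injOn Subtype.val (fun w hw => by
      simp only [coe_filter, mem_univ, true_and, Set.mem_ofPred_eq] at hw ⊢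
      exact hw ▸ hd w) Subtype.val_injective.injOn).trans (hD i)
  have hfew := card_few_monochromatic (hfib hA ha) (hfib hB hb) c
  rw [Fintype.card_coe] at hfew
  refine le_trans (Nat.cast_le.2 (card_le_card fun g hg => ?_)) (hfew.trans ?_)
  · rw [mem_filter_univ] at hg ⊢
    have hle : #{w | g (a w) = c ∧ g (b w) = c} ≤
        #{w | (∃ i ∈ A w, g i = c) ∧ ∃ i ∈ B w, g i = c} := by
      refine card_le_card_of_injOn Subtype.val (fun w hw => ?_) Subtype.val_injective.injOn
      simp only [coe_filter, mem_univ, true_and, Set.mem_ofPred_eq] at hw ⊢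
      exact ⟨⟨a w, ha w, hw.1⟩, b w, hb w, hw.2⟩
    exact (Nat.cast_le.2 hle).trans (hg.le.trans (by gcongr))
  · have hc : 0 ≤ 1 / (512 * (q : ℝ) ^ 4) := by positivity
    gcongr ?_ * _
    exact Real.exp_le_exp.2 (by linarith [mul_le_mul_of_nonneg_left hN hc])

lemma exists_colouring_inherit [Finite ι] [Fintype P] (A B : P → W → Finset ι)
    (hA : ∀ p i, #{w | i ∈ A p w} ≤ 4) (hB : ∀ p i, #{w | i ∈ B p w} ≤ 4) {N : ℝ}
    (hN : Fintype.card P * q * Real.exp (-(1 / (512 * (q : ℝ) ^ 4)) * N) < 1) :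
    ∃ g : ι → Fin q, ∀ p c, N ≤ #{w | (A p w).Nonempty ∧ (B p w).Nonempty} →
      1 / (64 * (q : ℝ) ^ 2) * N ≤ #{w | (∃ i ∈ A p w, g i = c) ∧ ∃ i ∈ B p w, g i = c} := by
  classical
  have := Fintype.ofFinite ι
  let X : (ι → Fin q) → P → Fin q → Finset W := fun g p c =>
    {w | (∃ i ∈ A p w, g i = c) ∧ ∃ i ∈ B p w, g i = c}
  let bad : P × Fin q → Finset (ι → Fin q) := fun p =>
    {g | N ≤ #{w | (A p.1 w).Nonempty ∧ (B p.1 w).Nonempty} ∧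
      (#(X g p.1 p.2) : ℝ) < 1 / (64 * (q : ℝ) ^ 2) * N}
  have hbad : ∀ p, (#(bad p) : ℝ) ≤
      Real.exp (-(1 / (512 * (q : ℝ) ^ 4)) * N) * Fintype.card (ι → Fin q) := by
    rintro ⟨p, c⟩
    by_cases hNp : N ≤ #{w | (A p w).Nonempty ∧ (B p w).Nonempty}
    · simpa [bad, hNp, X] using card_not_inherit_le (hA p) (hB p) c hNp
    · rw [show bad (p, c) = ∅ from filter_false_of_mem fun g _ h => hNp h.1, card_empty,
        Nat.cast_zero]
      positivity
  obtain ⟨g, hg⟩ := exists_forall_notMem_of_card_le hbad (by simpa using hN)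
  refine ⟨g, fun p c hNp => not_lt.1 fun hlt => hg (p, c) ?_⟩
  exact (mem_filter_univ _).2 ⟨hNp, hlt⟩

end RandomColouring

section Reservoir

lemma card_finset_card_le {α : Type*} [Fintype α] {z M : ℝ} (hz : 0 < z) (hz1 : z ≤ 1) :
    (#{S : Finset α | (#S : ℝ) ≤ M} : ℝ) ≤ Real.exp (M * -Real.log z + z * Fintype.card α) := by
  have hpow : ∀ S : Finset α, (#S : ℝ) ≤ M → 1 ≤ Real.exp (M * -Real.log z) * z ^ #S := by
    intro S hS
    rw [← Real.exp_log (pow_pos hz _), Real.log_pow, ← Real.exp_add, Real.one_le_exp_iff]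
    nlinarith [Real.log_nonpos hz.le hz1]
  calc (#{S : Finset α | (#S : ℝ) ≤ M} : ℝ)
      ≤ ∑ S : Finset α with (#S : ℝ) ≤ M, Real.exp (M * -Real.log z) * z ^ #S := by
        rw [card_eq_sum_ones, Nat.cast_sum, Nat.cast_one]
        exact sum_le_sum fun S hS => hpow S (mem_filter.1 hS).2
    _ ≤ ∑ S : Finset α, Real.exp (M * -Real.log z) * z ^ #S :=
        sum_le_sum_of_subset_of_nonneg (filter_subset _ _) fun S _ _ => by positivity
    _ = Real.exp (M * -Real.log z) * (z + 1) ^ Fintype.card α := by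
        rw [← mul_sum]
        congr 1
        simpa using Fintype.sum_pow_mul_eq_add_pow α z 1
    _ ≤ Real.exp (M * -Real.log z) * Real.exp z ^ Fintype.card α := by
        gcongr
        exact Real.add_one_le_exp z
    _ = Real.exp (M * -Real.log z + z * Fintype.card α) := by
        rw [← Real.exp_nat_mul, ← Real.exp_add, mul_comm (Fintype.card α : ℝ)]

variable {n : ℕ} [NeZero n]

/-- The positions at which the cyclic binary word `τ` differs from its predecessor. -/
def changes (τ : Fin n → Bool) : Finset (Fin n) := {j | τ j ≠ τ (j - 1)}

lemma injective_zero_changes :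
    Function.Injective fun τ : Fin n → Bool => (τ 0, changes τ) := by
  intro τ σ h
  obtain ⟨m, rfl⟩ := Nat.exists_eq_succ_of_ne_zero (NeZero.ne n)
  obtain ⟨hzero, hchanges⟩ := Prod.ext_iff.1 h
  funext j
  induction j using Fin.induction with
  | zero => exact hzero
  | succ j ih =>
    have hj : j.succ - 1 = j.castSucc := by
      rw [sub_eq_iff_eq_add, Fin.coeSucc_eq_succ]
    have hiff : τ j.succ ≠ τ j.castSucc ↔ σ j.succ ≠ σ j.castSucc := by
      simpa [changes, hj] using Finset.ext_iff.1 hchanges j.succ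
    rw [ih] at hiff
    revert hiff
    cases τ j.succ <;> cases σ j.succ <;> cases σ j.castSucc <;> decide

lemma card_few_changes {z M : ℝ} (hz : 0 < z) (hz1 : z ≤ 1) :
    (#{τ : Fin n → Bool | (#(changes τ) : ℝ) ≤ M} : ℝ) ≤
      2 * Real.exp (M * -Real.log z + z * n) := by
  have hle : #{τ : Fin n → Bool | (#(changes τ) : ℝ) ≤ M} ≤
      #((univ : Finset Bool) ×ˢ univ.filter fun S : Finset (Fin n) => (#S : ℝ) ≤ M) :=
    card_le_card_of_injOn _ (fun τ hτ => by simpa using hτ) injective_zero_changes.injOn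
  rw [card_product, card_univ, Fintype.card_bool] at hle
  have hsets := card_finset_card_le (α := Fin n) (M := M) hz hz1
  rw [Fintype.card_fin] at hsets
  calc (#{τ : Fin n → Bool | (#(changes τ) : ℝ) ≤ M} : ℝ)
      ≤ 2 * #{S : Finset (Fin n) | (#S : ℝ) ≤ M} := mod_cast hle
    _ ≤ _ := by gcongr

variable {V : Type*}

/-- The first vertex of the edge between positions `j` and `j + 1` of a cyclic order, oriented
forwards or backwards according to `τ j`. -/
def arcTail (e : Fin n ≃ V) (τ : Fin n → Bool) (j : Fin n) : V :=
  if τ j then e j else e (j + 1)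

/-- The second vertex of the edge between positions `j` and `j + 1` of a cyclic order, oriented
forwards or backwards according to `τ j`. -/
def arcHead (e : Fin n ≃ V) (τ : Fin n → Bool) (j : Fin n) : V :=
  if τ j then e (j + 1) else e j

variable [DecidableEq V]

lemma card_arcTail_le (e : Fin n ≃ V) (τ : Fin n → Bool) (w : V) :
    #{j | arcTail e τ j = w} ≤ 2 := by
  refine (card_le_card (t := {e.symm w, e.symm w - 1}) fun j hj => ?_).trans card_le_two
  rw [mem_filter_univ, arcTail] at hj
  split_ifs at hj <;> simp [← hj]

lemma card_arcHead_le (e : Fin n ≃ V) (τ : Fin n → Bool) (w : V) :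
    #{j | arcHead e τ j = w} ≤ 2 := by
  refine (card_le_card (t := {e.symm w - 1, e.symm w}) fun j hj => ?_).trans card_le_two
  rw [mem_filter_univ, arcHead] at hj
  split_ifs at hj <;> simp [← hj]

/-- The positions of the cyclic order `e`, with edges oriented by `τ`, at which an edge `wz` can be
exchanged for the pair of edges `xw`, `yz` of `S`. -/
def exchangeArcs (S : Finset (Sym2 V)) (e : Fin n ≃ V) (τ : Fin n → Bool) (x y : V) :
    Finset (Fin n) :=
  {j | s(x, arcTail e τ j) ∈ S ∧ s(y, arcHead e τ j) ∈ S}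

variable [Fintype V]

/-- The degree of `v` in the graph with edge set `S`. -/
def edgeDegree (S : Finset (Sym2 V)) (v : V) : ℕ := #{w | s(v, w) ∈ S}

lemma card_filter_mk_mem_le_four {κ : Type*} [Fintype κ] {u : κ → V} (hu : ∀ w, #{j | u j = w} ≤ 2)
    {A : Finset (Sym2 V)} {x : V} (hA : edgeDegree A x ≤ 2) : #{j | s(x, u j) ∈ A} ≤ 4 :=
  (card_le_mul_card_image_of_maps_to (f := u) (t := {w | s(x, w) ∈ A})
    (fun j hj => by simpa using hj) 2 fun w _ =>
      (card_le_card (filter_subset_filter _ (subset_univ _))).trans (hu w)).trans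
        (Nat.mul_le_mul_left 2 hA)

/- There are at most `2 n³ exp (c n / 2)` triples consisting of a cyclic order, a pair of vertices
and a word with few changes, while a fixed one of them fails with probability `exp (-c n)`. -/
lemma card_few_changes_mul_exp_lt_one {c : ℝ} (hc0 : 0 < c) (hc1 : c ≤ 1) (q : ℕ) :
    ∃ μ : ℝ, 0 < μ ∧ ∀ᶠ n : ℕ in atTop, ∀ [NeZero n],
      n ^ 3 * (#{τ : Fin n → Bool | (#(changes τ) : ℝ) ≤ μ * n} : ℝ) * q *
        Real.exp (-c * n) < 1 := by
  have hL : 0 ≤ -Real.log (c / 4) := by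
    rw [neg_nonneg]
    exact Real.log_nonpos (by positivity) (by linarith)
  set L := -Real.log (c / 4)
  have hμL : c / (4 * (L + 1)) * L ≤ c / 4 := by
    rw [div_mul_eq_mul_div, div_le_div_iff₀ (by positivity) (by norm_num)]
    nlinarith
  refine ⟨c / (4 * (L + 1)), by positivity, ?_⟩
  filter_upwards [eventually_pow_mul_exp_lt_one (2 * q) 3 (half_pos hc0)] with n hn _
  refine lt_of_le_of_lt ?_ hn
  calc n ^ 3 * (#{τ : Fin n → Bool | (#(changes τ) : ℝ) ≤ c / (4 * (L + 1)) * n} : ℝ) * q *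
        Real.exp (-c * n)
      ≤ n ^ 3 * (2 * Real.exp (c / (4 * (L + 1)) * n * L + c / 4 * n)) * q *
        Real.exp (-c * n) := by
        gcongr
        exact card_few_changes (by positivity) (by linarith)
    _ ≤ n ^ 3 * (2 * Real.exp (c / 2 * n)) * q * Real.exp (-c * n) := by
        gcongr
        nlinarith [n.cast_nonneg (α := ℝ)]
    _ = 2 * q * n ^ 3 * (Real.exp (c / 2 * n) * Real.exp (-c * n)) := by ring
    _ = 2 * q * n ^ 3 * Real.exp (-(c / 2) * n) := by
        rw [← Real.exp_add]
        ring_nf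

lemma exists_reservoir {β : ℝ} (hβ0 : 0 < β) (hβ1 : β ≤ 1) (q : ℕ) [NeZero q] :
    ∃ (μ : ℝ) (n₀ : ℕ), 0 < μ ∧ ∀ (V ι : Type*) [Fintype V] [DecidableEq V] [Fintype ι]
      (n : ℕ) [NeZero n] (F : ι → Finset (Sym2 V)) (e : ι → Fin n ≃ V),
      n₀ ≤ n → Fintype.card ι ≤ n → Fintype.card V = n → (∀ i x, edgeDegree (F i) x ≤ 2) →
      ∃ J : Finset ι, (#J : ℝ) ≤ Fintype.card ι / q ∧
        ∀ i x y (τ : Fin n → Bool), (#(changes τ) : ℝ) ≤ μ * n →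
          β * n ≤ #(exchangeArcs (univ.biUnion F) (e i) τ x y) →
          1 / (64 * (q : ℝ) ^ 2) * (β * n) ≤ #(exchangeArcs (J.biUnion F) (e i) τ x y) := by
  classical
  have hq : (1 : ℝ) ≤ q ^ 4 := one_le_pow₀ (mod_cast NeZero.one_le)
  set c : ℝ := 1 / (512 * (q : ℝ) ^ 4) * β with hc
  have hc0 : 0 < c := by positivity
  have hc1 : c ≤ 1 := mul_le_one₀ (by rw [div_le_one (by positivity)]; linarith) hβ0.le hβ1
  obtain ⟨μ, hμ, hfew⟩ := card_few_changes_mul_exp_lt_one hc0 hc1 q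
  obtain ⟨n₀, hn₀⟩ := eventually_atTop.1 hfew
  refine ⟨μ, n₀, hμ, fun V ι _ _ _ n _ F e hn hι hV hdeg => ?_⟩
  let P := ι × V × V × {τ : Fin n → Bool // (#(changes τ) : ℝ) ≤ μ * n}
  have hP : Fintype.card P * q * Real.exp (-(1 / (512 * (q : ℝ) ^ 4)) * (β * n)) < 1 := by
    refine lt_of_le_of_lt ?_ (hn₀ n hn)
    rw [← mul_assoc, neg_mul, ← hc]
    gcongr
    have hι' : (Fintype.card ι : ℝ) ≤ n := mod_cast hι
    simp only [P, Fintype.card_prod, hV, Nat.cast_mul, Fintype.card_subtype, ← mul_assoc,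
      pow_three']
    gcongr
  obtain ⟨g, hg⟩ := exists_colouring_inherit
    (fun (p : P) j => univ.filter fun i => s(p.2.1, arcTail (e p.1) p.2.2.2 j) ∈ F i)
    (fun (p : P) j => univ.filter fun i => s(p.2.2.1, arcHead (e p.1) p.2.2.2 j) ∈ F i)
    (fun p i => by
      simpa using card_filter_mk_mem_le_four (card_arcTail_le (e p.1) p.2.2.2) (hdeg i p.2.1))
    (fun p i => by
      simpa using card_filter_mk_mem_le_four (card_arcHead_le (e p.1) p.2.2.2) (hdeg i p.2.2.1)) hP
  obtain ⟨c, hc⟩ : ∃ c, (#{i | g i = c} : ℝ) ≤ Fintype.card ι / q :=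
    Fintype.exists_card_fiber_le_of_card_le_nsmul g (by
      rw [Fintype.card_fin, nsmul_eq_mul, mul_div_cancel₀ _ (mod_cast NeZero.ne q)])
  refine ⟨({i | g i = c} : Finset ι), hc, fun i x y τ hτ h => ?_⟩
  simpa [exchangeArcs, Finset.Nonempty, and_comm] using
    hg (i, x, y, ⟨τ, hτ⟩) c (by simpa [exchangeArcs, Finset.Nonempty] using h)

end Reservoir

section Exchange

variable {V : Type*} {n : ℕ} [NeZero n] (e e' : Fin n ≃ V)

lemma mk_add_one_injective (hn : 3 ≤ n) : Function.Injective fun j => s(e j, e (j + 1)) :=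
  fun a b h => e.injective (mk_succPerm_injective e hn (by simpa using h))

lemma mk_arcTail_arcHead (τ : Fin n → Bool) (j : Fin n) :
    s(arcTail e τ j, arcHead e τ j) = s(e j, e (j + 1)) := by
  unfold arcTail arcHead
  split_ifs
  exacts [rfl, Sym2.eq_swap]

variable [DecidableEq V]

lemma card_cyclicEdges_sdiff_comm (hn : 3 ≤ n) :
    #(cyclicEdges e \ cyclicEdges e') = #(cyclicEdges e' \ cyclicEdges e) :=
  card_sdiff_comm (by rw [card_cyclicEdges e hn, card_cyclicEdges e' hn])

/-- The orientation of the edges of `e` which agrees with `e'` on all edges shared with `e'`. -/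
def agreeWord (j : Fin n) : Bool := decide (succPerm e' (e j) = e (j + 1))

variable {e e'}

lemma succPerm_arcTail_agreeWord {j : Fin n} (hj : s(e j, e (j + 1)) ∈ cyclicEdges e') :
    succPerm e' (arcTail e (agreeWord e e') j) = arcHead e (agreeWord e e') j := by
  rw [mk_mem_cyclicEdges] at hj
  by_cases h : succPerm e' (e j) = e (j + 1)
  · simp [arcTail, arcHead, agreeWord, h]
  · simpa [arcTail, arcHead, agreeWord, h] using hj.resolve_left h

lemma agreeWord_add_one (hn : 3 ≤ n) {j : Fin n} (hj : s(e j, e (j + 1)) ∈ cyclicEdges e')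
    (hj' : s(e (j + 1), e (j + 1 + 1)) ∈ cyclicEdges e') :
    agreeWord e e' (j + 1) = agreeWord e e' j := by
  have hne : e (j + 1 + 1) ≠ e j := by
    simpa using succPerm_succPerm_ne e hn (e j)
  rw [mk_mem_cyclicEdges] at hj hj'
  unfold agreeWord
  rw [decide_eq_decide]
  constructor <;> intro h
  · refine hj.resolve_right fun h' => hne (h.symm.trans h')
  · refine hj'.resolve_right fun h' => hne ((succPerm e').injective (h'.trans h.symm))

variable (e e')

lemma card_filter_mk_notMem_cyclicEdges (hn : 3 ≤ n) :
    #{j | s(e j, e (j + 1)) ∉ cyclicEdges e'} = #(cyclicEdges e \ cyclicEdges e') := by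
  rw [← card_image_of_injective _ (mk_add_one_injective e hn)]
  congr 1
  ext z
  simp only [mem_image, mem_filter_univ, cyclicEdges, Finset.mem_sdiff, mem_univ, true_and]
  grind

lemma card_changes_agreeWord_le (hn : 3 ≤ n) :
    #(changes (agreeWord e e')) ≤ 2 * #(cyclicEdges e \ cyclicEdges e') := by
  rw [← card_filter_mk_notMem_cyclicEdges e e' hn]
  set Z : Finset (Fin n) := {j | s(e j, e (j + 1)) ∉ cyclicEdges e'}
  have hsub : changes (agreeWord e e') ⊆ Z ∪ Z.image (· + 1) := by
    intro j hj
    by_contra hjZ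
    obtain ⟨i, rfl⟩ : ∃ i, j = i + 1 := ⟨j - 1, (sub_add_cancel j 1).symm⟩
    simp only [mem_union, mem_image, add_left_inj, exists_eq_right, Z, mem_filter_univ, not_or,
      not_not] at hjZ
    simp only [changes, mem_filter_univ, add_sub_cancel_right] at hj
    exact hj (agreeWord_add_one hn hjZ.2 hjZ.1)
  linarith [(card_le_card hsub).trans (card_union_le _ _), card_image_le (s := Z) (f := (· + 1))]

variable [Fintype V]

/-- The vertices `w` for which, in the cyclic order `e`, the edge from `w` to its successor `z` can
be exchanged for the pair of edges `xw`, `yz` of `S`. -/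
def exchangeVertices (S : Finset (Sym2 V)) (e : Fin n ≃ V) (x y : V) : Finset V :=
  {w | s(x, w) ∈ S ∧ s(y, succPerm e w) ∈ S}

lemma card_exchangeVertices_le (hn : 3 ≤ n) (S : Finset (Sym2 V)) (x y : V) :
    #(exchangeVertices S e' x y) ≤
      #(exchangeArcs S e (agreeWord e e') x y) + #(cyclicEdges e' \ cyclicEdges e) := by
  have hsub : exchangeVertices S e' x y ⊆
      (exchangeArcs S e (agreeWord e e') x y).image (arcTail e (agreeWord e e')) ∪
        univ.filter fun w => s(w, succPerm e' w) ∉ cyclicEdges e := by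
    intro w hw
    simp only [exchangeVertices, exchangeArcs, mem_union, mem_image, mem_filter_univ] at hw ⊢
    refine or_iff_not_imp_right.2 fun h => ?_
    obtain ⟨j, -, hj⟩ := mem_image.1 (not_not.1 h)
    have hsucc := succPerm_arcTail_agreeWord (hj ▸ mk_succPerm_mem_cyclicEdges e' w)
    have htail : arcTail e (agreeWord e e') j = w := mk_succPerm_injective e' hn (by
      simp only [hsucc, mk_arcTail_arcHead, hj])
    refine ⟨j, ?_, htail⟩
    rwa [← hsucc, htail]
  refine (card_le_card hsub).trans ((card_union_le _ _).trans (add_le_add card_image_le ?_))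
  refine card_le_card_of_injOn (fun w => s(w, succPerm e' w)) (fun w hw => ?_)
    (mk_succPerm_injective e' hn).injOn
  exact mem_sdiff.2 ⟨mk_succPerm_mem_cyclicEdges e' w, (mem_filter.1 hw).2⟩

lemma card_exchangeArcs_le (hn : 3 ≤ n) (S : Finset (Sym2 V)) (x y : V) :
    #(exchangeArcs S e (agreeWord e e') x y) ≤
      #(exchangeVertices S e' x y) + #(cyclicEdges e \ cyclicEdges e') := by
  rw [← card_filter_mk_notMem_cyclicEdges e e' hn]
  set Z : Finset (Fin n) := {j | s(e j, e (j + 1)) ∉ cyclicEdges e'} with hZ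
  have hshared : ∀ j ∉ Z, s(e j, e (j + 1)) ∈ cyclicEdges e' := by simp [hZ]
  refine card_le_card_sdiff_add_card.trans (Nat.add_le_add_right ?_ #Z)
  refine card_le_card_of_injOn (arcTail e (agreeWord e e')) (fun j hj => ?_)
    fun j hj j' hj' h => ?_
  · obtain ⟨hj, hjZ⟩ := mem_sdiff.1 hj
    rw [mem_coe, exchangeVertices, mem_filter_univ,
      succPerm_arcTail_agreeWord (hshared j hjZ)]
    exact (mem_filter.1 hj).2
  · have hsucc := succPerm_arcTail_agreeWord (hshared j (mem_sdiff.1 hj).2)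
    have hsucc' := succPerm_arcTail_agreeWord (hshared j' (mem_sdiff.1 hj').2)
    apply mk_add_one_injective e hn
    simp only [← mk_arcTail_arcHead e (agreeWord e e'), ← hsucc, ← hsucc', h]

/-- Every pair of vertices admits more than `m` exchanges with edges of `R`, in all cyclic orders
with at most `r` edges outside the cyclic order `e`. -/
def HasExchanges (R : Finset (Sym2 V)) (e : Fin n ≃ V) (r m : ℕ) : Prop :=
  ∀ e' : Fin n ≃ V, #(cyclicEdges e' \ cyclicEdges e) ≤ r →
    ∀ x y, m < #(exchangeVertices R e' x y)

variable {e}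

lemma hasExchanges_of_exchangeArcs (hn : 3 ≤ n) {R S : Finset (Sym2 V)} {r m : ℕ} {M B C : ℝ}
    (hres : ∀ x y (τ : Fin n → Bool), (#(changes τ) : ℝ) ≤ M →
      B ≤ #(exchangeArcs S e τ x y) → C ≤ #(exchangeArcs R e τ x y))
    (hM : 2 * (r : ℝ) ≤ M) (hB : ∀ (e' : Fin n ≃ V) x y, B + r ≤ #(exchangeVertices S e' x y))
    (hC : m + r < C) : HasExchanges R e r m := by
  intro e' he x y
  have he' := (card_cyclicEdges_sdiff_comm e e' hn).le.trans he
  have hchange : (#(changes (agreeWord e e')) : ℝ) ≤ 2 * r :=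
    mod_cast (card_changes_agreeWord_le e e' hn).trans (Nat.mul_le_mul_left 2 he')
  have hS : (#(exchangeVertices S e' x y) : ℝ) ≤ #(exchangeArcs S e (agreeWord e e') x y) + r :=
    mod_cast (card_exchangeVertices_le e e' hn S x y).trans (Nat.add_le_add_left he _)
  have hR : (#(exchangeArcs R e (agreeWord e e') x y) : ℝ) ≤ #(exchangeVertices R e' x y) + r :=
    mod_cast (card_exchangeArcs_le e e' hn R x y).trans (Nat.add_le_add_left he' _)
  have hCR := hres x y (agreeWord e e') (hchange.trans hM) (by linarith [hB e' x y])
  exact_mod_cast (by linarith : (m : ℝ) < #(exchangeVertices R e' x y))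

lemma card_filter_mk_succPerm_mem (S : Finset (Sym2 V)) (e : Fin n ≃ V) (y : V) :
    #{w | s(y, succPerm e w) ∈ S} = edgeDegree S y :=
  card_equiv (succPerm e) (by simp)

lemma edgeDegree_add_edgeDegree_le (S : Finset (Sym2 V)) (e : Fin n ≃ V) (x y : V) :
    edgeDegree S x + edgeDegree S y ≤ #(exchangeVertices S e x y) + Fintype.card V := by
  rw [← card_filter_mk_succPerm_mem S e y, edgeDegree, exchangeVertices, filter_and,
    ← card_union_add_card_inter, add_comm]
  exact Nat.add_le_add_left (card_le_univ _) _

lemma two_mul_card_le_edgeDegree_biUnion {ι : Type*} [Fintype ι] (hn : 3 ≤ n)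
    {F : ι → Finset (Sym2 V)} (hF : Pairwise fun i j => Disjoint (F i) (F j)) (e : ι → Fin n ≃ V)
    (x : V) :
    2 * Fintype.card ι ≤
      edgeDegree (univ.biUnion F) x + 2 * #{i | ¬ IsInner (e i) (F i) x} := by
  let u : ι × Bool → V := fun p =>
    if p.2 then succPerm (e p.1) x else (succPerm (e p.1)).symm x
  have hmem : ∀ p ∈ (univ.filter fun i => IsInner (e i) (F i) x) ×ˢ (univ : Finset Bool),
      s(x, u p) ∈ F p.1 := by
    rintro ⟨i, t⟩ hp
    obtain ⟨hsucc, hpred⟩ := (mem_filter.1 (mem_product.1 hp).1).2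
    cases t
    · exact Sym2.eq_swap ▸ hpred
    · exact hsucc
  have hle : #((univ.filter fun i => IsInner (e i) (F i) x) ×ˢ (univ : Finset Bool)) ≤
      edgeDegree (univ.biUnion F) x := by
    refine card_le_card_of_injOn u (fun p hp => ?_) fun p hp p' hp' h => ?_
    · simpa using ⟨p.1, hmem p hp⟩
    · have hi : p.1 = p'.1 := by
        by_contra hne
        exact disjoint_left.1 (hF hne) (h ▸ hmem p hp) (hmem p' hp')
      have hne : succPerm (e p.1) x ≠ (succPerm (e p.1)).symm x := by
        rw [Ne, Equiv.eq_symm_apply]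
        exact succPerm_succPerm_ne _ hn x
      refine Prod.ext hi ?_
      simp only [u, ← hi] at h
      grind
  rw [card_product, card_univ, Fintype.card_bool] at hle
  have hsplit := card_filter_add_card_filter_not (s := univ) fun i => IsInner (e i) (F i) x
  rw [card_univ] at hsplit
  omega

end Exchange

section TwoOpt

variable {V : Type*} [DecidableEq V] {n : ℕ} [NeZero n]

lemma mk_mem_cyclicEdges_sdiff_of_ne_last {m : ℕ} (hm : 3 ≤ m + 1) (e : Fin (m + 1) ≃ V)
    {j : Fin (m + 1)} (hj : j ≠ Fin.last m) :
    s(e j, e (j + 1)) ∈ cyclicEdges e \ {s(e (Fin.last m), e 0)} := by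
  refine mem_sdiff.2 ⟨by simpa using mk_succPerm_mem_cyclicEdges e (e j), fun h => hj ?_⟩
  exact mk_add_one_injective e hm (by simpa using h)

/- The initial segment of `e` up to position `a` is reversed. -/
lemma exists_cyclicEdges_subset_of_ne_last {m : ℕ} (hm : 3 ≤ m + 1) (e : Fin (m + 1) ≃ V)
    {a : Fin (m + 1)} (ha : a ≠ Fin.last m) :
    ∃ e' : Fin (m + 1) ≃ V, cyclicEdges e' ⊆ insert s(e (Fin.last m), e a)
      (insert s(e 0, e (a + 1)) (cyclicEdges e \ {s(e (Fin.last m), e 0)})) := by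
  have val_add_one : ∀ {j : Fin (m + 1)}, j ≠ Fin.last m → (j + 1).val = j.val + 1 := fun hj =>
    Fin.val_add_one_of_lt (Fin.lt_last_iff_ne_last.2 hj)
  let σ : Fin (m + 1) → Fin (m + 1) := fun j => if j ≤ a then a - j else j
  have hle : ∀ {j}, j ≤ a → σ j = a - j := fun h => if_pos h
  have hgt : ∀ {j}, a < j → σ j = j := fun h => if_neg (not_le.2 h)
  have hσ : Function.Involutive σ := by
    intro j
    rcases le_or_gt j a with h | h
    · rw [hle h, hle (by rw [Fin.le_def, Fin.sub_val_of_le h]; omega), sub_sub_cancel]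
    · rw [hgt h, hgt h]
  have hlast : a < Fin.last m := Fin.lt_last_iff_ne_last.2 ha
  refine ⟨hσ.toPerm.trans e, fun z hz => ?_⟩
  obtain ⟨j, -, rfl⟩ := mem_image.1 hz
  simp only [Equiv.trans_apply, Function.Involutive.coe_toPerm, mem_insert]
  rcases eq_or_ne j (Fin.last m) with rfl | hj
  · rw [hgt hlast, Fin.last_add_one, hle (Fin.zero_le _), sub_zero]
    exact Or.inl rfl
  rcases lt_trichotomy j a with h | rfl | h
  · have hsucc : j + 1 ≤ a := by rw [Fin.le_def, val_add_one hj]; exact h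
    have hne : a - (j + 1) ≠ Fin.last m := by
      refine (lt_of_le_of_lt ?_ hlast).ne
      rw [Fin.le_def, Fin.sub_val_of_le hsucc]
      exact Nat.sub_le _ _
    rw [hle h.le, hle hsucc, Sym2.eq_swap, ← sub_add_cancel (a - j) 1, sub_sub]
    exact Or.inr (Or.inr (mk_mem_cyclicEdges_sdiff_of_ne_last hm e hne))
  · rw [hle le_rfl, sub_self, hgt (by rw [Fin.lt_def, val_add_one hj]; omega)]
    exact Or.inr (Or.inl rfl)
  · rw [hgt h, hgt (by rw [Fin.lt_def, val_add_one hj]; omega)]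
    exact Or.inr (Or.inr (mk_mem_cyclicEdges_sdiff_of_ne_last hm e hj))

lemma exists_two_opt (hn : 3 ≤ n) (e : Fin n ≃ V) {x w : V} (hxw : w ≠ x) :
    ∃ e' : Fin n ≃ V, cyclicEdges e' ⊆ insert s(x, w) (insert s(succPerm e x, succPerm e w)
      (cyclicEdges e \ {s(x, succPerm e x)})) := by
  obtain ⟨m, rfl⟩ : ∃ m, n = m + 1 := ⟨n - 1, by omega⟩
  obtain ⟨c, hc⟩ := e.surjective (succPerm e x)
  let e₀ : Fin (m + 1) ≃ V := (Equiv.addRight c).trans e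
  have hsucc : succPerm e₀ = succPerm e := by
    ext v
    simp [e₀, succPerm, add_right_comm]
  have hzero : e₀ 0 = succPerm e x := by simp [e₀, hc]
  have hlast : e₀ (Fin.last m) = x := by
    apply (succPerm e₀).injective
    rw [succPerm_apply, Fin.last_add_one, hzero, hsucc]
  obtain ⟨a, rfl⟩ := e₀.surjective w
  have hedges : cyclicEdges e₀ = cyclicEdges e := by
    ext z
    simp only [mem_cyclicEdges, hsucc]
  have ha : succPerm e (e₀ a) = e₀ (a + 1) := by simp [← hsucc]
  rw [ha, ← hzero, ← hlast, ← hedges]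
  exact exists_cyclicEdges_subset_of_ne_last hn e₀ fun h => hxw (h ▸ hlast)

lemma exists_two_opt_sdiff (hn : 3 ≤ n) (e : Fin n ≃ V) {S : Finset (Sym2 V)} {x w : V}
    (hxw : w ≠ x) (hx : s(x, w) ∈ S) (hsucc : s(succPerm e x, succPerm e w) ∈ S) :
    ∃ e' : Fin n ≃ V, cyclicEdges e' \ S ⊆ (cyclicEdges e \ S).erase s(x, succPerm e x) ∧
      ∀ T, #(cyclicEdges e' \ T) ≤ #(cyclicEdges e \ T) + 2 := by
  obtain ⟨e', he'⟩ := exists_two_opt hn e hxw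
  refine ⟨e', fun z hz => ?_, fun T => ?_⟩
  · obtain ⟨hz, hzS⟩ := mem_sdiff.1 hz
    have hmem := he' hz
    rw [mem_insert, mem_insert, Finset.mem_sdiff, mem_singleton] at hmem
    rcases hmem with rfl | rfl | ⟨hz, hne⟩
    exacts [absurd hx hzS, absurd hsucc hzS, mem_erase.2 ⟨hne, mem_sdiff.2 ⟨hz, hzS⟩⟩]
  · have hsub : cyclicEdges e' \ T ⊆
        insert s(x, w) (insert s(succPerm e x, succPerm e w) (cyclicEdges e \ T)) := by
      intro z hz
      have hmem := he' (mem_sdiff.1 hz).1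
      grind
    exact (card_le_card hsub).trans ((card_insert_le _ _).trans
      (Nat.succ_le_succ (card_insert_le _ _)))

/- Each exchange removes an edge outside `A ∪ N` and introduces two new edges. -/
lemma exists_completion (hn : 3 ≤ n) (e : Fin n ≃ V) {A N : Finset (Sym2 V)} {k : ℕ}
    (hk : #(cyclicEdges e \ A) ≤ k)
    (hN : ∀ e' : Fin n ≃ V, #(cyclicEdges e' \ cyclicEdges e) ≤ 2 * k → ∀ x,
      s(x, succPerm e' x) ∈ cyclicEdges e \ A →
      ∃ w, w ≠ x ∧ s(x, w) ∈ N ∧ s(succPerm e' x, succPerm e' w) ∈ N) :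
    ∃ e' : Fin n ≃ V, cyclicEdges e' ⊆ A ∪ N ∧ #(cyclicEdges e' \ cyclicEdges e) ≤ 2 * k := by
  suffices h : ∀ (b : ℕ) (e' : Fin n ≃ V), #(cyclicEdges e' \ (A ∪ N)) = b →
      cyclicEdges e' \ (A ∪ N) ⊆ cyclicEdges e →
      #(cyclicEdges e' \ cyclicEdges e) + 2 * b ≤ 2 * k →
      ∃ e' : Fin n ≃ V, cyclicEdges e' ⊆ A ∪ N ∧ #(cyclicEdges e' \ cyclicEdges e) ≤ 2 * k by
    refine h _ e rfl sdiff_subset ?_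
    rw [Finset.sdiff_self, card_empty, zero_add]
    gcongr
    exact (card_le_card (sdiff_subset_sdiff le_rfl subset_union_left)).trans hk
  intro b
  induction b using Nat.strong_induction_on with
  | _ b ih =>
    intro e' hb hsub hcard
    rcases (cyclicEdges e' \ (A ∪ N)).eq_empty_or_nonempty with hempty | ⟨z, hz⟩
    · exact ⟨e', sdiff_eq_empty_iff_subset.1 hempty, by omega⟩
    obtain ⟨x, rfl⟩ := (mem_cyclicEdges e').1 (mem_sdiff.1 hz).1
    have hzA := fun h => (mem_sdiff.1 hz).2 (mem_union_left N h)
    obtain ⟨w, hwx, hx, hsucc⟩ := hN e' (by omega) x (mem_sdiff.2 ⟨hsub hz, hzA⟩)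
    obtain ⟨e'', hbad, hnew⟩ :=
      exists_two_opt_sdiff hn e' hwx (mem_union_right A hx) (mem_union_right A hsucc)
    have hlt : #(cyclicEdges e'' \ (A ∪ N)) < b :=
      hb ▸ (card_le_card hbad).trans_lt (card_erase_lt_of_mem hz)
    have hcard' := hnew (cyclicEdges e)
    exact ih _ hlt e'' rfl (hbad.trans ((erase_subset _ _).trans hsub)) (by omega)

end TwoOpt

section Completion

variable {V : Type*} [DecidableEq V] {n : ℕ} [NeZero n]

lemma not_isInner_of_mem_sdiff {e : Fin n ≃ V} {A : Finset (Sym2 V)} {z : Sym2 V}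
    (hz : z ∈ cyclicEdges e \ A) {v : V} (hv : v ∈ z) : ¬ IsInner e A v := by
  obtain ⟨hze, hzA⟩ := mem_sdiff.1 hz
  obtain ⟨u, rfl⟩ := (mem_cyclicEdges e).1 hze
  rcases Sym2.mem_iff.1 hv with rfl | rfl
  · exact fun h => hzA h.1
  · exact fun h => hzA (by simpa using h.2)

variable [Fintype V]

lemma edgeDegree_mono {S T : Finset (Sym2 V)} (h : S ⊆ T) (v : V) :
    edgeDegree S v ≤ edgeDegree T v :=
  card_le_card (monotone_filter_right _ fun _ _ hw => h hw)

lemma edgeDegree_union_le (S T : Finset (Sym2 V)) (v : V) :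
    edgeDegree (S ∪ T) v ≤ edgeDegree S v + edgeDegree T v := by
  simp only [edgeDegree, mem_union, filter_or]
  exact card_union_le _ _

lemma edgeDegree_cyclicEdges_le (e : Fin n ≃ V) (v : V) : edgeDegree (cyclicEdges e) v ≤ 2 := by
  refine (card_le_card (t := {succPerm e v, (succPerm e).symm v}) fun w hw => ?_).trans card_le_two
  rw [mem_filter_univ, mk_mem_cyclicEdges] at hw
  rw [mem_insert, mem_singleton, Equiv.eq_symm_apply]
  exact hw.imp_left Eq.symm

lemma sum_edgeDegree_le (S : Finset (Sym2 V)) : ∑ v, edgeDegree S v ≤ 2 * #S := by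
  have hsum : ∑ v, edgeDegree S v = #{p : V × V | s(p.1, p.2) ∈ S} := by
    simp only [edgeDegree, card_filter, Fintype.sum_prod_type]
  rw [hsum]
  refine card_le_mul_card_image_of_maps_to (f := fun p : V × V => s(p.1, p.2))
    (fun p hp => (mem_filter.1 hp).2) 2 fun z _ => ?_
  induction z with | _ a b =>
  refine (card_le_card (t := {(a, b), (b, a)}) ?_).trans card_le_two
  rintro ⟨c, d⟩ hp
  simpa [Prod.ext_iff] using (mem_filter.1 hp).2

/- `R` is the reservoir, `U` the set of its edges used so far, `X` the set of saturated vertices. -/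
lemma exists_completion_avoiding (hn : 3 ≤ n) {e : Fin n ≃ V} {A R U : Finset (Sym2 V)}
    {X : Finset V} {k D H : ℕ} (hk : #(cyclicEdges e \ A) ≤ k)
    (hX : ∀ z ∈ cyclicEdges e \ A, ∀ v ∈ z, v ∉ X) (hD : ∀ v, edgeDegree U v ≤ D)
    (hH : #X ≤ H) (hR : ∀ x, s(x, x) ∉ R) (hexch : HasExchanges R e (2 * k) (2 * D + 2 * H)) :
    ∃ e' : Fin n ≃ V, (∀ z ∈ cyclicEdges e', z ∈ A ∨ z ∈ R ∧ z ∉ U ∧ ∀ v ∈ z, v ∉ X) ∧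
      #(cyclicEdges e' \ cyclicEdges e) ≤ 2 * k := by
  obtain ⟨e', hsub, hcard⟩ := exists_completion hn e
    (N := {z ∈ R | z ∉ U ∧ ∀ v ∈ z, v ∉ X}) hk fun e' he' x hx => by
    set y := succPerm e' x
    have hsmall : #((univ.filter (s(x, ·) ∈ U) ∪ univ.filter (s(y, succPerm e' ·) ∈ U)) ∪
        (X ∪ univ.filter (succPerm e' · ∈ X))) ≤ 2 * D + 2 * H := by
      refine (card_union_le _ _).trans (Nat.add_le_add ((card_union_le _ _).trans ?_)
        ((card_union_le _ _).trans ?_))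
      · rw [card_filter_mk_succPerm_mem]
        exact (Nat.add_le_add (hD x) (hD y)).trans (two_mul D).ge
      · have hX' : #{w | succPerm e' w ∈ X} = #X := card_equiv (succPerm e') (by simp)
        omega
    obtain ⟨w, hw, hw'⟩ :=
      exists_mem_notMem_of_card_lt_card (hsmall.trans_lt (hexch e' he' x y))
    simp only [exchangeVertices, mem_union, mem_filter_univ, not_or] at hw hw'
    have hfree : ∀ {u v}, s(u, v) ∉ U → u ∉ X → v ∉ X → s(u, v) ∈ R →
        s(u, v) ∈ R.filter fun z => z ∉ U ∧ ∀ v ∈ z, v ∉ X := fun hU hu hv hR =>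
      mem_filter.2 ⟨hR, hU, Sym2.ball.2 ⟨hu, hv⟩⟩
    obtain ⟨hxX, hyX⟩ := Sym2.ball.1 (hX _ hx)
    exact ⟨w, fun h => hR x (h ▸ hw.1), hfree hw'.1.1 hxX hw'.2.1 hw.1,
      hfree hw'.1.2 hyX hw'.2.2 hw.2⟩
  exact ⟨e', fun z hz => by simpa using hsub hz, hcard⟩

end Completion

section DisjointCompletions

variable {ι V : Type*} [DecidableEq V] {n : ℕ} [NeZero n]

/-- The edges of the reservoir `R` used by the cyclic orders with index in `I`. -/
def usedEdges (R : Finset (Sym2 V)) (I : Finset ι) (e' : ι → Fin n ≃ V) : Finset (Sym2 V) :=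
  (I.biUnion fun i => cyclicEdges (e' i)) ∩ R

lemma usedEdges_insert_update [DecidableEq ι] (R : Finset (Sym2 V)) {I : Finset ι}
    (e' : ι → Fin n ≃ V) {i : ι} (hi : i ∉ I) (f : Fin n ≃ V) :
    usedEdges R (insert i I) (Function.update e' i f) = usedEdges R I e' ∪ cyclicEdges f ∩ R := by
  have hupd : (I.biUnion fun j => cyclicEdges (Function.update e' i f j)) =
      I.biUnion fun j => cyclicEdges (e' j) := biUnion_congr rfl fun j hj => by
    rw [Function.update_of_ne (ne_of_mem_of_not_mem hj hi)]
  rw [usedEdges, usedEdges, biUnion_insert, Function.update_self, hupd, union_inter_distrib_right,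
    union_comm]

lemma card_cyclicEdges_inter_le (e f : Fin n ≃ V) {A R : Finset (Sym2 V)} (hAR : Disjoint A R) :
    #(cyclicEdges f ∩ R) ≤ #(cyclicEdges f \ cyclicEdges e) + #(cyclicEdges e \ A) := by
  refine (card_le_card fun z hz => ?_).trans (card_union_le _ _)
  obtain ⟨hzf, hzR⟩ := mem_inter.1 hz
  have hzA := disjoint_right.1 hAR hzR
  grind

variable [Fintype V]

/-- The cyclic orders `e' i` with `i ∈ I` are edge-disjoint and complete the linear forests `F i` by
edges of the reservoir `R`. Each takes at most `3 * k` edges from `R`, and only those for which `v`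
is not an inner vertex of `F i` may use edges of `R` at a vertex `v` where `h` such edges are
already in use. -/
structure IsPartialCompletion (F : ι → Finset (Sym2 V)) (e : ι → Fin n ≃ V) (R : Finset (Sym2 V))
    (k h : ℕ) (I : Finset ι) (e' : ι → Fin n ≃ V) : Prop where
  subset : ∀ i ∈ I, cyclicEdges (e' i) ⊆ F i ∪ R
  disjoint : ∀ i ∈ I, ∀ j ∈ I, i ≠ j → Disjoint (cyclicEdges (e' i)) (cyclicEdges (e' j))
  card_usedEdges_le : #(usedEdges R I e') ≤ 3 * k * #I
  edgeDegree_usedEdges_le : ∀ v, edgeDegree (usedEdges R I e') v ≤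
    h + 1 + 2 * #{i ∈ I | ¬ IsInner (e i) (F i) v}

/-- The vertices at which `h` edges of `U` are already in use and which are inner vertices of the
linear forest `A` in the cyclic order `e`, so that its completion need not use edges there. -/
def saturatedVertices (U : Finset (Sym2 V)) (h : ℕ) (e : Fin n ≃ V) (A : Finset (Sym2 V)) :
    Finset V :=
  {v | h ≤ edgeDegree U v ∧ IsInner e A v}

lemma card_saturatedVertices_mul_le (U : Finset (Sym2 V)) (h : ℕ) (e : Fin n ≃ V)
    (A : Finset (Sym2 V)) : #(saturatedVertices U h e A) * h ≤ 2 * #U :=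
  calc #(saturatedVertices U h e A) * h
      ≤ ∑ v ∈ saturatedVertices U h e A, edgeDegree U v :=
        card_nsmul_le_sum _ _ _ fun _ hv => (mem_filter.1 hv).2.1
    _ ≤ ∑ v, edgeDegree U v := sum_le_sum_of_subset (subset_univ _)
    _ ≤ 2 * #U := sum_edgeDegree_le U

section Insert

variable [DecidableEq ι] {F : ι → Finset (Sym2 V)} {e e' : ι → Fin n ≃ V} {R : Finset (Sym2 V)}
  {k h : ℕ} {I : Finset ι} {i : ι} {f : Fin n ≃ V}

lemma edgeDegree_usedEdges_insert_le (hI : IsPartialCompletion F e R k h I e') (hi : i ∉ I)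
    (hFR : Disjoint (F i) R)
    (hf : ∀ z ∈ cyclicEdges f, z ∈ F i ∨ z ∈ R ∧ z ∉ usedEdges R I e' ∧
      ∀ v ∈ z, v ∉ saturatedVertices (usedEdges R I e') h (e i) (F i)) (v : V) :
    edgeDegree (usedEdges R (insert i I) (Function.update e' i f)) v ≤
      h + 1 + 2 * #{j ∈ insert i I | ¬ IsInner (e j) (F j) v} := by
  rw [usedEdges_insert_update R e' hi]
  refine (edgeDegree_union_le _ _ v).trans ?_
  have hold := hI.edgeDegree_usedEdges_le v
  have hnew : edgeDegree (cyclicEdges f ∩ R) v ≤ 2 :=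
    (edgeDegree_mono inter_subset_left v).trans (edgeDegree_cyclicEdges_le f v)
  rw [filter_insert]
  by_cases hinner : IsInner (e i) (F i) v
  · rw [if_neg (not_not.2 hinner)]
    by_cases hv : v ∈ saturatedVertices (usedEdges R I e') h (e i) (F i)
    · have hzero : edgeDegree (cyclicEdges f ∩ R) v = 0 := by
        refine card_eq_zero.2 (filter_eq_empty_iff.2 fun w _ hw => ?_)
        obtain ⟨hwf, hwR⟩ := mem_inter.1 hw
        rcases hf _ hwf with hwF | ⟨-, -, hfree⟩
        · exact disjoint_left.1 hFR hwF hwR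
        · exact hfree v (Sym2.mem_mk_left v w) hv
      omega
    · have hlt : edgeDegree (usedEdges R I e') v < h := by
        simpa [saturatedVertices, hinner] using hv
      omega
  · rw [if_pos hinner, card_insert_of_notMem fun hmem => hi (mem_filter.1 hmem).1]
    omega

lemma IsPartialCompletion.insert_update (hI : IsPartialCompletion F e R k h I e') (hi : i ∉ I)
    (hF : ∀ j ∈ I, Disjoint (F j) (F i)) (hFR : ∀ j ∈ insert i I, Disjoint (F j) R)
    (hk : #(cyclicEdges (e i) \ F i) ≤ k)
    (hf : ∀ z ∈ cyclicEdges f, z ∈ F i ∨ z ∈ R ∧ z ∉ usedEdges R I e' ∧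
      ∀ v ∈ z, v ∉ saturatedVertices (usedEdges R I e') h (e i) (F i))
    (hcard : #(cyclicEdges f \ cyclicEdges (e i)) ≤ 2 * k) :
    IsPartialCompletion F e R k h (insert i I) (Function.update e' i f) := by
  have hupd : ∀ j ∈ I, Function.update e' i f j = e' j := fun j hj =>
    Function.update_of_ne (ne_of_mem_of_not_mem hj hi) _ _
  have hdisj : ∀ j ∈ I, Disjoint (cyclicEdges f) (cyclicEdges (e' j)) := by
    refine fun j hj => disjoint_left.2 fun z hz hzj => ?_
    rcases hf z hz with hzi | ⟨hzR, hzU, -⟩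
    · rcases mem_union.1 (hI.subset j hj hzj) with hzj | hzR
      · exact disjoint_left.1 (hF j hj) hzj hzi
      · exact disjoint_left.1 (hFR i (mem_insert_self i I)) hzi hzR
    · exact hzU (mem_inter.2 ⟨mem_biUnion.2 ⟨j, hj, hzj⟩, hzR⟩)
  refine ⟨(forall_mem_insert _ _ _).2 ⟨fun z hz => ?_, fun j hj => ?_⟩, fun a ha b hb hab => ?_, ?_,
    edgeDegree_usedEdges_insert_le hI hi (hFR i (mem_insert_self i I)) hf⟩
  · rw [Function.update_self] at hz
    exact mem_union.2 ((hf z hz).imp_right And.left)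
  · rw [hupd j hj]
    exact hI.subset j hj
  · rcases mem_insert.1 ha with rfl | haI <;> rcases mem_insert.1 hb with rfl | hbI
    · exact absurd rfl hab
    · rw [Function.update_self, hupd b hbI]
      exact hdisj b hbI
    · rw [Function.update_self, hupd a haI]
      exact (hdisj a haI).symm
    · rw [hupd a haI, hupd b hbI]
      exact hI.disjoint a haI b hbI hab
  · rw [usedEdges_insert_update R e' hi, card_insert_of_notMem hi]
    have hnew := card_cyclicEdges_inter_le (e i) f (hFR i (mem_insert_self i I))
    calc #(usedEdges R I e' ∪ cyclicEdges f ∩ R)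
        ≤ 3 * k * #I + (2 * k + k) := (card_union_le _ _).trans
          (Nat.add_le_add hI.card_usedEdges_le (hnew.trans (Nat.add_le_add hcard hk)))
      _ = 3 * k * (#I + 1) := by ring

end Insert

lemma exists_disjoint_completions (hn : 3 ≤ n) {F : ι → Finset (Sym2 V)} {e : ι → Fin n ≃ V}
    {R : Finset (Sym2 V)} {I : Finset ι} {k B h H : ℕ}
    (hF : ∀ i ∈ I, ∀ j ∈ I, i ≠ j → Disjoint (F i) (F j)) (hFR : ∀ i ∈ I, Disjoint (F i) R)
    (hR : ∀ x, s(x, x) ∉ R) (hk : ∀ i ∈ I, #(cyclicEdges (e i) \ F i) ≤ k)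
    (hB : ∀ v, #{i ∈ I | ¬ IsInner (e i) (F i) v} ≤ B) (hH : 6 * k * #I < h * (H + 1))
    (hexch : ∀ i ∈ I, HasExchanges R (e i) (2 * k) (2 * (h + 1 + 2 * B) + 2 * H)) :
    ∃ e' : ι → Fin n ≃ V, (∀ i ∈ I, cyclicEdges (e' i) ⊆ F i ∪ R) ∧
      ∀ i ∈ I, ∀ j ∈ I, i ≠ j → Disjoint (cyclicEdges (e' i)) (cyclicEdges (e' j)) := by
  classical
  suffices hpartial : ∀ I' ⊆ I, ∃ e', IsPartialCompletion F e R k h I' e' by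
    obtain ⟨e', he'⟩ := hpartial I subset_rfl
    exact ⟨e', he'.subset, he'.disjoint⟩
  intro I'
  induction I' using Finset.induction_on with
  | empty => exact fun _ => ⟨e, by simp, by simp, by simp [usedEdges],
      by simp [usedEdges, edgeDegree]⟩
  | insert i I' hi ih =>
    intro hsub
    obtain ⟨hiI, hI'⟩ := insert_subset_iff.1 hsub
    obtain ⟨e', he'⟩ := ih hI'
    have hdeg : ∀ v, edgeDegree (usedEdges R I' e') v ≤ h + 1 + 2 * B := fun v =>
      (he'.edgeDegree_usedEdges_le v).trans (Nat.add_le_add_left (Nat.mul_le_mul_left 2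
        ((card_le_card (filter_subset_filter _ hI')).trans (hB v))) _)
    have hsat : #(saturatedVertices (usedEdges R I' e') h (e i) (F i)) ≤ H := by
      refine Nat.lt_succ_iff.1 (lt_of_mul_lt_mul_right (a := h) ?_ (Nat.zero_le h))
      calc #(saturatedVertices (usedEdges R I' e') h (e i) (F i)) * h
          ≤ 2 * (3 * k * #I') := (card_saturatedVertices_mul_le _ _ _ _).trans
            (Nat.mul_le_mul_left 2 he'.card_usedEdges_le)
        _ ≤ 6 * k * #I := by linarith [Nat.mul_le_mul_left k (card_le_card hI')]
        _ < (H + 1) * h := by rwa [mul_comm (H + 1)]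
    obtain ⟨f, hf, hcard⟩ := exists_completion_avoiding hn (hk i hiI)
      (fun z hz v hv hvX => not_isInner_of_mem_sdiff hz hv (mem_filter.1 hvX).2.2)
      hdeg hsat hR (hexch i hiI)
    exact ⟨_, he'.insert_update hi
      (fun j hj => hF j (hI' hj) i hiI (ne_of_mem_of_not_mem hj hi))
      (fun j hj => hFR j (hsub hj)) (hk i hiI) hf hcard⟩

end DisjointCompletions

section Packing

variable {ι V : Type*} [Fintype ι] [Fintype V] [DecidableEq V] {n : ℕ} [NeZero n]

lemma card_cyclicEdges_sdiff_le (e : Fin n ≃ V) (A : Finset (Sym2 V)) :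
    #(cyclicEdges e \ A) ≤ #{v | ¬ IsInner e A v} := by
  refine le_trans (card_le_card fun z hz => ?_) (card_image_le (f := fun v => s(v, succPerm e v)))
  obtain ⟨v, rfl⟩ := (mem_cyclicEdges e).1 (mem_sdiff.1 hz).1
  exact mem_image_of_mem _ (mem_filter.2
    ⟨mem_univ v, not_isInner_of_mem_sdiff hz (Sym2.mem_mk_left _ _)⟩)

lemma card_many_missing_mul_le (e : ι → Fin n ≃ V) (F : ι → Finset (Sym2 V)) (k : ℕ) {c : ℝ}
    (hc : ∀ v, (#{i | ¬ IsInner (e i) (F i) v} : ℝ) ≤ c) :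
    (#{i | k < #(cyclicEdges (e i) \ F i)} : ℝ) * (k + 1) ≤ Fintype.card V * c := by
  have hcount : #{i | k < #(cyclicEdges (e i) \ F i)} * (k + 1) ≤
      ∑ v, #{i | ¬ IsInner (e i) (F i) v} :=
    calc #{i | k < #(cyclicEdges (e i) \ F i)} * (k + 1)
        ≤ ∑ i with k < #(cyclicEdges (e i) \ F i), #(cyclicEdges (e i) \ F i) :=
          card_nsmul_le_sum _ _ _ fun _ hi => Nat.succ_le_of_lt (mem_filter.1 hi).2
      _ ≤ ∑ i, #(cyclicEdges (e i) \ F i) := sum_le_sum_of_subset (subset_univ _)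
      _ ≤ ∑ i, #{v | ¬ IsInner (e i) (F i) v} :=
          sum_le_sum fun i _ => card_cyclicEdges_sdiff_le (e i) (F i)
      _ = ∑ v, #{i | ¬ IsInner (e i) (F i) v} := by
          simp only [card_filter]
          exact sum_comm
  calc (#{i | k < #(cyclicEdges (e i) \ F i)} : ℝ) * (k + 1)
      ≤ ∑ v, (#{i | ¬ IsInner (e i) (F i) v} : ℝ) := mod_cast hcount
    _ ≤ ∑ _v : V, c := sum_le_sum fun v _ => hc v
    _ = Fintype.card V * c := by rw [sum_const, card_univ, nsmul_eq_mul]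

lemma exists_disjoint_card_sdiff_le (e : ι → Fin n ≃ V) (F : ι → Finset (Sym2 V)) (J : Finset ι)
    {k : ℕ} {s : ℝ} (hc : ∀ v, (#{i | ¬ IsInner (e i) (F i) v} : ℝ) ≤ s ^ 2 * Fintype.card V)
    (hs : 0 < s * Fintype.card V) (hk : s * Fintype.card V ≤ k + 1) :
    ∃ I : Finset ι, Disjoint I J ∧ (∀ i ∈ I, #(cyclicEdges (e i) \ F i) ≤ k) ∧
      Fintype.card ι - #J - s * Fintype.card V ≤ #I := by
  classical
  set X : Finset ι := {i | k < #(cyclicEdges (e i) \ F i)} with hX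
  have hXcard : (#X : ℝ) ≤ s * Fintype.card V := by
    refine le_of_mul_le_mul_right ?_ hs
    calc (#X : ℝ) * (s * Fintype.card V) ≤ #X * (k + 1) := by gcongr
      _ ≤ Fintype.card V * (s ^ 2 * Fintype.card V) := card_many_missing_mul_le e F k hc
      _ = s * Fintype.card V * (s * Fintype.card V) := by ring
  refine ⟨univ \ (J ∪ X), disjoint_of_subset_right subset_union_left sdiff_disjoint,
    fun i hi => ?_, ?_⟩
  · simpa [hX] using (mem_sdiff.1 hi).2 ∘ mem_union_right J
  · have hcard : Fintype.card ι ≤ #(univ \ (J ∪ X)) + (#J + #X) :=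
      card_le_card_sdiff_add_card.trans (Nat.add_le_add_left (card_union_le J X) _)
    have hcard' : (Fintype.card ι : ℝ) ≤ #(univ \ (J ∪ X)) + (#J + #X) := mod_cast hcard
    linarith

lemma IsLinearForestPacking.hasExchanges {G : SimpleGraph V} {F : ι → Finset (Sym2 V)}
    {e : ι → Fin n ≃ V} (hF : IsLinearForestPacking G F e) (hn : 3 ≤ n) {d c M B C : ℝ}
    (hc : ∀ v, (#{i | ¬ IsInner (e i) (F i) v} : ℝ) ≤ c) (hcard : d / 2 - c ≤ Fintype.card ι)
    {R : Finset (Sym2 V)} {f : Fin n ≃ V} {r m : ℕ}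
    (hres : ∀ x y (τ : Fin n → Bool), (#(changes τ) : ℝ) ≤ M →
      B ≤ #(exchangeArcs (univ.biUnion F) f τ x y) → C ≤ #(exchangeArcs R f τ x y))
    (hM : 2 * (r : ℝ) ≤ M) (hB : B + r + Fintype.card V + 8 * c ≤ 2 * d) (hC : m + r < C) :
    HasExchanges R f r m := by
  refine hasExchanges_of_exchangeArcs hn hres hM (fun e' x y => ?_) hC
  have hdeg : ∀ x, d - 4 * c ≤ edgeDegree (univ.biUnion F) x := by
    intro x
    have hle : (2 * Fintype.card ι : ℝ) ≤ edgeDegree (univ.biUnion F) x +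
        2 * #{i | ¬ IsInner (e i) (F i) x} :=
      mod_cast two_mul_card_le_edgeDegree_biUnion hn hF.disjoint e x
    linarith [hc x]
  have hsum : (edgeDegree (univ.biUnion F) x + edgeDegree (univ.biUnion F) y : ℝ) ≤
      #(exchangeVertices (univ.biUnion F) e' x y) + Fintype.card V :=
    mod_cast edgeDegree_add_edgeDegree_le (univ.biUnion F) e' x y
  linarith [hdeg x, hdeg y]

/- The degree bound `h` is about `θ x / 16`; then at most `96 s x / θ` vertices become saturated. -/
lemma exists_degree_and_saturation_bounds {s θ x : ℝ} (hs0 : 0 < s) (hsθ : s ≤ θ ^ 2 / 1000)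
    (hθ0 : 0 < θ) (hθ1 : θ ≤ 1) (hx : 8 ≤ x * θ) :
    ∃ h H : ℕ, (∀ N : ℕ, N ≤ x → 6 * ⌊s * x⌋₊ * N < h * (H + 1)) ∧
      ((2 * (h + 1 + 2 * ⌊s ^ 2 * x⌋₊) + 2 * H : ℕ) : ℝ) + (2 * ⌊s * x⌋₊ : ℕ) < θ * x := by
  have hx0 : 0 < x := pos_of_mul_pos_left (by linarith) hθ0.le
  have hk : (⌊s * x⌋₊ : ℝ) ≤ s * x := Nat.floor_le (by positivity)
  refine ⟨⌈θ * x / 16⌉₊, ⌊96 * s * x / θ⌋₊, fun N hN => ?_, ?_⟩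
  · have hlt : (6 * ⌊s * x⌋₊ * N : ℝ) < ⌈θ * x / 16⌉₊ * (⌊96 * s * x / θ⌋₊ + 1) :=
      calc (6 * ⌊s * x⌋₊ * N : ℝ) ≤ 6 * (s * x) * x := by gcongr
        _ = θ * x / 16 * (96 * s * x / θ) := by field_simp; norm_num
        _ < θ * x / 16 * (⌊96 * s * x / θ⌋₊ + 1) := by gcongr; exact Nat.lt_floor_add_one _
        _ ≤ ⌈θ * x / 16⌉₊ * (⌊96 * s * x / θ⌋₊ + 1) := by gcongr; exact Nat.le_ceil _
    exact_mod_cast hlt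
  · have hs2 : (⌊s ^ 2 * x⌋₊ : ℝ) ≤ s ^ 2 * x := Nat.floor_le (by positivity)
    have hh : (⌈θ * x / 16⌉₊ : ℝ) < θ * x / 16 + 1 := Nat.ceil_lt_add_one (by positivity)
    have hH : (⌊96 * s * x / θ⌋₊ : ℝ) ≤ θ * x / 10 := by
      refine (Nat.floor_le (by positivity)).trans ?_
      rw [div_le_iff₀ hθ0]
      linarith [mul_le_mul_of_nonneg_right hsθ hx0.le]
    have hθ2 : θ ^ 2 ≤ θ := pow_le_of_le_one hθ0.le hθ1 two_ne_zero
    have hsx : s * x ≤ θ * x / 1000 := by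
      linarith [mul_le_mul_of_nonneg_right (by linarith : s ≤ θ / 1000) hx0.le]
    have hs2x : s ^ 2 * x ≤ s * x := by
      gcongr
      exact pow_le_of_le_one hs0.le (by linarith) two_ne_zero
    push_cast
    linarith

lemma IsLinearForestPacking.exists_disjoint_cyclicEdges {G : SimpleGraph V}
    {F : ι → Finset (Sym2 V)} {e : ι → Fin n ≃ V} (hF : IsLinearForestPacking G F e) (hn : 3 ≤ n)
    (hV : Fintype.card V = n) {d η θ μ s : ℝ} (hd : (1 / 2 + η) * n ≤ d) (hdn : d ≤ n)
    (hs0 : 0 < s) (hsθ : s ≤ θ ^ 2 / 1000) (hsμ : s ≤ μ / 4) (hsη : s ≤ η / 16) (hη1 : η ≤ 1)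
    (hθ0 : 0 < θ) (hθ1 : θ ≤ 1) (hnθ : 8 ≤ n * θ)
    (hinner : ∀ v, (#{i | ¬ IsInner (e i) (F i) v} : ℝ) ≤ s ^ 2 * n)
    (hι : |(Fintype.card ι : ℝ) - d / 2| ≤ s ^ 2 * n) {J : Finset ι} (hJ : (#J : ℝ) ≤ η / 8 * n)
    (hres : ∀ i x y (τ : Fin n → Bool), (#(changes τ) : ℝ) ≤ μ * n →
      η * n ≤ #(exchangeArcs (univ.biUnion F) (e i) τ x y) →
      θ * n ≤ #(exchangeArcs (J.biUnion F) (e i) τ x y)) :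
    ∃ (m : ℕ) (e' : Fin m → Fin n ≃ V), (d - η * n) / 2 ≤ m ∧
      (∀ j, ∀ z ∈ cyclicEdges (e' j), z ∈ G.edgeSet) ∧
      Pairwise fun j k => Disjoint (cyclicEdges (e' j)) (cyclicEdges (e' k)) := by
  have hn0 : (0 : ℝ) < n := by exact_mod_cast NeZero.pos n
  have hk : (⌊s * n⌋₊ : ℝ) ≤ s * n := Nat.floor_le (by positivity)
  have hs2 : s ^ 2 * n ≤ s * n := by
    gcongr
    exact pow_le_of_le_one hs0.le (by linarith) two_ne_zero
  have hsηn : s * n ≤ η / 16 * n := by gcongr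
  have hsμn : s * n ≤ μ / 4 * n := by gcongr
  obtain ⟨hlo, hup⟩ := abs_le.1 hι
  obtain ⟨I, hIJ, hmiss, hI⟩ := exists_disjoint_card_sdiff_le e F J (k := ⌊s * n⌋₊) (s := s)
    (by rwa [hV]) (by rw [hV]; positivity) (by rw [hV]; exact (Nat.lt_floor_add_one _).le)
  rw [hV] at hI
  obtain ⟨h, H, hused, hfew⟩ := exists_degree_and_saturation_bounds hs0 hsθ hθ0 hθ1 hnθ
  have hIn : (#I : ℝ) ≤ n :=
    (Nat.cast_le.2 (card_le_univ I)).trans (by linarith)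
  have hRG : ∀ z ∈ J.biUnion F, z ∈ G.edgeSet := fun z hz => by
    obtain ⟨j, -, hzj⟩ := mem_biUnion.1 hz
    exact hF.mem_edgeSet j z hzj
  obtain ⟨e', hsub, hdisj⟩ := exists_disjoint_completions hn (fun i _ j _ hij => hF.disjoint hij)
    (fun i hi => (disjoint_biUnion_right _ _ _).2 fun j hj =>
      hF.disjoint fun hij => disjoint_left.1 hIJ hi (hij ▸ hj))
    (fun x hx => G.irrefl (G.mem_edgeSet.1 (hRG _ hx))) hmiss
    (fun v => (card_le_card (filter_subset_filter _ (subset_univ I))).trans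
      (Nat.le_floor (hinner v))) (hused _ hIn)
    fun i _ => hF.hasExchanges (d := d) hn hinner (by linarith) (hres i) (by push_cast; linarith)
      (by rw [hV]; push_cast; linarith) hfew
  exact ⟨#I, fun j => e' (I.equivFin.symm j), by linarith,
    fun j z hz => (mem_union.1 (hsub _ (I.equivFin.symm j).2 hz)).elim (hF.mem_edgeSet _ z) (hRG z),
    fun j k hjk => hdisj _ (I.equivFin.symm j).2 _ (I.equivFin.symm k).2 fun h =>
      hjk (I.equivFin.symm.injective (Subtype.ext h))⟩

end Packing

lemma exists_disjoint_cyclicEdges {η : ℝ} (hη0 : 0 < η) (hη1 : η ≤ 1) :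
    ∃ n₀ : ℕ, ∀ (V : Type*) [Fintype V] [DecidableEq V] (n : ℕ) [NeZero n] (G : SimpleGraph V)
      [DecidableRel G.Adj] (d : ℕ), Fintype.card V = n → n₀ ≤ n → G.IsRegularOfDegree d →
      (1 / 2 + η) * (n : ℝ) ≤ d → ∃ (m : ℕ) (e : Fin m → Fin n ≃ V),
        ((d : ℝ) - η * n) / 2 ≤ m ∧ (∀ j, ∀ z ∈ cyclicEdges (e j), z ∈ G.edgeSet) ∧
        Pairwise fun j k => Disjoint (cyclicEdges (e j)) (cyclicEdges (e k)) := by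
  set q : ℕ := ⌈8 / η⌉₊
  have hqη : 8 ≤ q * η := (div_le_iff₀ hη0).1 (Nat.le_ceil _)
  have : NeZero q := ⟨(Nat.ceil_pos.2 (by positivity)).ne'⟩
  have hq1 : (1 : ℝ) ≤ q := mod_cast NeZero.one_le
  obtain ⟨μ, n₁, hμ, hreservoir⟩ := exists_reservoir hη0 hη1 q
  set θ : ℝ := 1 / (64 * (q : ℝ) ^ 2) * η with hθ
  have hθ0 : 0 < θ := by positivity
  have hθ1 : θ ≤ 1 :=
    mul_le_one₀ ((div_le_one (by positivity)).2 (by linarith [one_le_pow₀ hq1 (n := 2)])) hη0.le hη1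
  obtain ⟨s, hs0, hsθ, hsμ, hsη⟩ : ∃ s, 0 < s ∧ s ≤ θ ^ 2 / 1000 ∧ s ≤ μ / 4 ∧ s ≤ η / 16 :=
    ⟨min (θ ^ 2 / 1000) (min (μ / 4) (η / 16)), by positivity, min_le_left _ _,
      (min_le_right _ _).trans (min_le_left _ _), (min_le_right _ _).trans (min_le_right _ _)⟩
  have hs2 : s ^ 2 ≤ η / 16 :=
    (pow_le_of_le_one hs0.le (by linarith) two_ne_zero).trans hsη
  obtain ⟨n₂, hforest⟩ := exists_isLinearForestPacking (ε := s ^ 2) (by positivity) (by linarith)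
  refine ⟨max 3 (max n₁ (max n₂ ⌈8 / θ⌉₊)), fun V _ _ n _ G _ d hV hn hG hd => ?_⟩
  obtain ⟨hn3, hn1, hn2, hnθ⟩ : 3 ≤ n ∧ n₁ ≤ n ∧ n₂ ≤ n ∧ ⌈8 / θ⌉₊ ≤ n := by
    simpa only [max_le_iff] using hn
  have hn0 : (0 : ℝ) ≤ n := n.cast_nonneg
  have hdn : (d : ℝ) ≤ n := by
    obtain ⟨v⟩ : Nonempty V := Fintype.card_pos_iff.1 (by omega)
    exact mod_cast hV ▸ hG.degree_eq v ▸ (G.degree_lt_card_verts v).le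
  obtain ⟨ι, _, F, e, hF, hinner, hι⟩ := hforest V n G d hV hn2 hG (by nlinarith)
  have hιn : (Fintype.card ι : ℝ) ≤ n := by
    linarith [(abs_le.1 hι).2, mul_le_mul_of_nonneg_right (by linarith : s ^ 2 ≤ 1 / 2) hn0]
  obtain ⟨J, hJ, hres⟩ := hreservoir V ι n F e hn1 (mod_cast hιn) hV fun i x =>
    (edgeDegree_mono (hF.subset_cyclicEdges i) x).trans (edgeDegree_cyclicEdges_le (e i) x)
  have hJn : (#J : ℝ) ≤ η / 8 * n := by
    refine hJ.trans ((div_le_iff₀ (by positivity)).2 (hιn.trans ?_))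
    linarith [mul_le_mul_of_nonneg_right hqη hn0]
  exact hF.exists_disjoint_cyclicEdges hn3 hV hd hdn hs0 hsθ hsμ hsη hη1 hθ0 hθ1
    ((div_le_iff₀ hθ0).1 (Nat.ceil_le.1 hnθ)) hinner hι hJn
    fun i x y τ hτ hfull => by simpa only [hθ, mul_assoc] using hres i x y τ hτ hfull

end HamiltonPacking

/-- For every η > 0 there exists n₀ such that every d-regular graph on n ≥ n₀ vertices with
d ≥ (1/2 + η)n contains at least (d − ηn)/2 pairwise edge-disjoint Hamilton cycles. -/
theorem regular_graph_edge_disjoint_hamilton (η : ℝ) (hη : 0 < η) :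
    ∃ n₀ : ℕ, ∀ (V : Type) [Fintype V] [DecidableEq V] (G : SimpleGraph V)
      [DecidableRel G.Adj] (d : ℕ),
      n₀ ≤ Fintype.card V →
      G.IsRegularOfDegree d →
      ((1 / 2 + η) * (Fintype.card V : ℝ) ≤ (d : ℝ)) →
      ∃ (m : ℕ) (x : Fin m → V) (c : ∀ j : Fin m, G.Walk (x j) (x j)),
        ((d : ℝ) - η * (Fintype.card V : ℝ)) / 2 ≤ (m : ℝ) ∧
        (∀ j, (c j).IsHamiltonianCycle) ∧
        ∀ j k : Fin m, j ≠ k → ∀ e : Sym2 V, e ∈ (c j).edges → e ∉ (c k).edges := by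
  rcases le_or_gt η 1 with hη1 | hη1
  · obtain ⟨n₀, hn₀⟩ := HamiltonPacking.exists_disjoint_cyclicEdges hη hη1
    refine ⟨max 3 n₀, fun V _ _ G _ d hn hG hd => ?_⟩
    obtain ⟨hn3, hn⟩ := max_le_iff.1 hn
    have : NeZero (Fintype.card V) := ⟨by omega⟩
    obtain ⟨m, e, hm, heG, hdisj⟩ := hn₀ V (Fintype.card V) G d rfl hn hG hd
    choose x c hc hce using fun j =>
      HamiltonPacking.exists_isHamiltonianCycle_edges_subset G hn3 (e j) fun v =>
        heG j _ (HamiltonPacking.mk_succPerm_mem_cyclicEdges (e j) v)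
    exact ⟨m, x, c, hm, hc, fun j k hjk z hzj hzk =>
      Finset.disjoint_left.1 (hdisj hjk) (hce j z hzj) (hce k z hzk)⟩
  · refine ⟨1, fun V _ _ G _ d hn hG hd => ?_⟩
    obtain ⟨v⟩ : Nonempty V := Fintype.card_pos_iff.1 hn
    have hdeg : (d : ℝ) < Fintype.card V := mod_cast hG.degree_eq v ▸ G.degree_lt_card_verts v
    nlinarith
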